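/- arXiv:1303.6156 — 2 statements merged into one kernel-verified Lean document; each statement's English description precedes it below -/
import Mathlib

section
/- Let ε₀ > 0, β ∈ ℝ∖{0}. Suppose Q₀ and Q₁ are real analytic real-valued functions on Δ_{ε₀} with Q₀(0) = 0, and a₁, a₂ are holomorphic functions on Δ_{ε₀} with a₁(0) = a₂(0) = 0 and a₁ not identically zero, satisfying on Δ_{ε₀}: (a) Re[ 2iβ z (Q₀)_z(z) + i a₁(z)(1 + Q₀(z)²) ] ≡ 0; (b) Re[ i (1 + Q₀(z)²) a₂(z) − i Q₁(z) a₁(z) ] ≡ 0; (c) Re[ iβ z (Q₁)_z(z) + (Q₁(z)/i)(i − Q₀(z)) a₁(z) + (1/2 + Q₀(z)/(2i))·( −Q₁(z) a₁(z) + (i − Q₀(z))² a₂(z) ) ] ≡ 0. Then Q₁(z) ≡ Q₁(0)(1 + Q₀(z)²) and a₂(z) ≡ Q₁(0) a₁(z) on Δ_{ε₀}. -/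
open Filter Set Metric Complex

/-- The Wirtinger derivative `∂u/∂z = (u_x - i u_y)/2` of a real-valued function on `ℂ`. -/
noncomputable def wDeriv (u : ℂ → ℝ) (z : ℂ) : ℂ :=
  (((fderiv ℝ u z) 1 : ℝ) - Complex.I * ((fderiv ℝ u z) Complex.I : ℝ)) / 2

open scoped ComplexConjugate Topology

lemma aux_line (z v : ℂ) : HasDerivAt (fun t : ℝ => z + (t : ℂ) * v) v 0 := by
  have h : HasDerivAt (fun t : ℝ => (t : ℂ)) 1 0 := Complex.ofRealCLM.hasDerivAt
  simpa using (h.mul_const v).const_add z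

lemma aux_dirC {f : ℂ → ℂ} {z : ℂ} (v : ℂ) (h : DifferentiableAt ℂ f z) :
    HasDerivAt (fun t : ℝ => f (z + (t : ℂ) * v)) (deriv f z * v) 0 := by
  have h1 : HasDerivAt f (deriv f z) (z + ((0 : ℝ) : ℂ) * v) := by simpa using h.hasDerivAt
  exact h1.comp (0 : ℝ) (aux_line z v)

lemma aux_dirR {u : ℂ → ℝ} {z : ℂ} (v : ℂ) (h : DifferentiableAt ℝ u z) :
    HasDerivAt (fun t : ℝ => u (z + (t : ℂ) * v)) (fderiv ℝ u z v) 0 := by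
  have h1 : HasFDerivAt u (fderiv ℝ u z) (z + ((0 : ℝ) : ℂ) * v) := by simpa using h.hasFDerivAt
  exact h1.comp_hasDerivAt (0 : ℝ) (aux_line z v)

lemma aux_ev {ε : ℝ} {z : ℂ} (hz : z ∈ ball (0 : ℂ) ε) (v : ℂ) :
    ∀ᶠ t : ℝ in 𝓝 0, z + (t : ℂ) * v ∈ ball (0 : ℂ) ε := by
  have h := (aux_line z v).continuousAt
  refine h.eventually_mem ?_
  simpa using isOpen_ball.mem_nhds (by simpa using hz)

lemma aux_im {F : ℝ → ℂ} {F' : ℂ} {x : ℝ} (h : HasDerivAt F F' x) :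
    HasDerivAt (fun t => (F t).im) F'.im x :=
  Complex.imCLM.hasFDerivAt.comp_hasDerivAt x h

lemma aux_conj {F : ℝ → ℂ} {F' : ℂ} {x : ℝ} (h : HasDerivAt F F' x) :
    HasDerivAt (fun t => conj (F t)) (conj F') x :=
  h.star

/-- One Wirtinger differentiation of a sesquiholomorphic identity. -/
lemma aux_step {n : ℕ} {ε : ℝ} (f g : Fin n → ℂ → ℂ)
    (hf : ∀ j, DifferentiableOn ℂ (f j) (ball 0 ε)) (hg : ∀ j, DifferentiableOn ℂ (g j) (ball 0 ε))
    (h : ∀ z ∈ ball (0 : ℂ) ε, ∑ j, f j z * conj (g j z) = 0) :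
    ∀ z ∈ ball (0 : ℂ) ε, ∑ j, deriv (f j) z * conj (g j z) = 0 := by
  intro z hz
  have key : ∀ v : ℂ, ∑ j, (deriv (f j) z * v * conj (g j z)
      + f j z * conj (deriv (g j) z * v)) = 0 := by
    intro v
    have h1 : HasDerivAt (fun t : ℝ => ∑ j, f j (z + (t : ℂ) * v) * conj (g j (z + (t : ℂ) * v)))
        (∑ j, (deriv (f j) z * v * conj (g j z) + f j z * conj (deriv (g j) z * v))) 0 := by
      refine HasDerivAt.fun_sum fun j _ => ?_
      have := (aux_dirC v ((hf j).differentiableAt (isOpen_ball.mem_nhds hz))).fun_mul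
        (aux_conj (aux_dirC v ((hg j).differentiableAt (isOpen_ball.mem_nhds hz))))
      exact this.congr_deriv (by simp)
    have h2 : HasDerivAt (fun t : ℝ => ∑ j, f j (z + (t : ℂ) * v) * conj (g j (z + (t : ℂ) * v)))
        0 0 := by
      refine (hasDerivAt_const (0 : ℝ) (0 : ℂ)).congr_of_eventuallyEq ?_
      filter_upwards [aux_ev hz v] with t ht using h _ ht
    exact h1.unique h2
  have k1 := key 1
  have kI := key I
  have : (2 : ℂ) * ∑ j, deriv (f j) z * conj (g j z) =
      ∑ j, (deriv (f j) z * 1 * conj (g j z) + f j z * conj (deriv (g j) z * 1))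
      - I * ∑ j, (deriv (f j) z * I * conj (g j z) + f j z * conj (deriv (g j) z * I)) := by
    rw [Finset.mul_sum, Finset.mul_sum, ← Finset.sum_sub_distrib]
    refine Finset.sum_congr rfl fun j _ => ?_
    simp only [map_mul, conj_I, mul_one]
    linear_combination (deriv (f j) z * conj (g j z) - f j z * conj (deriv (g j) z)) * I_mul_I
  rw [k1, kI] at this
  simpa using this

lemma aux_iter {n : ℕ} {ε : ℝ} (hε : 0 < ε) (g : Fin n → ℂ → ℂ)
    (hg : ∀ j, DifferentiableOn ℂ (g j) (ball 0 ε)) (m : ℕ) :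
    ∀ f : Fin n → ℂ → ℂ, (∀ j, DifferentiableOn ℂ (f j) (ball 0 ε)) →
    (∀ z ∈ ball (0 : ℂ) ε, ∑ j, f j z * conj (g j z) = 0) →
    iteratedDeriv m (fun z => ∑ j, f j z * conj (g j 0)) 0 = 0 := by
  induction m with
  | zero => intro f hf h; simpa using h 0 (mem_ball_self hε)
  | succ m ih =>
    intro f hf h
    rw [iteratedDeriv_succ']
    have e : deriv (fun z => ∑ j, f j z * conj (g j 0)) =ᶠ[𝓝 0]
        fun z => ∑ j, deriv (f j) z * conj (g j 0) := by
      filter_upwards [isOpen_ball.mem_nhds (mem_ball_self hε)] with z hz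
      refine HasDerivAt.deriv (HasDerivAt.fun_sum fun j _ => ?_)
      exact ((hf j).differentiableAt (isOpen_ball.mem_nhds hz)).hasDerivAt.mul_const _
    rw [e.iteratedDeriv_eq]
    exact ih _ (fun j => (hf j).deriv isOpen_ball) (aux_step f g hf hg h)

lemma aux_polar {n : ℕ} {ε : ℝ} (hε : 0 < ε) (f g : Fin n → ℂ → ℂ)
    (hf : ∀ j, DifferentiableOn ℂ (f j) (ball 0 ε)) (hg : ∀ j, DifferentiableOn ℂ (g j) (ball 0 ε))
    (h : ∀ z ∈ ball (0 : ℂ) ε, ∑ j, f j z * conj (g j z) = 0) :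
    ∀ z ∈ ball (0 : ℂ) ε, ∑ j, f j z * conj (g j 0) = 0 := by
  intro z hz
  have hd : DifferentiableOn ℂ (fun z => ∑ j, f j z * conj (g j 0)) (ball 0 ε) :=
    DifferentiableOn.fun_sum fun j _ => (hf j).mul_const _
  have := Complex.taylorSeries_eq_on_ball' hz hd
  rw [← this]
  simp [aux_iter hε g hg _ f hf h]

lemma aux_theta (u : ℂ → ℝ) (z : ℂ) :
    (I * z * wDeriv u z).re = fderiv ℝ u z (z * I) / 2 := by
  have : z * I = (-z.im) • (1 : ℂ) + z.re • I := by
    apply Complex.ext <;> simp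
  rw [this, map_add, map_smul, map_smul]
  simp [wDeriv]
  ring

/-- The pure holomorphic part of the compatibility identity. -/
lemma aux_hol {ε β : ℝ} (hε : 0 < ε) (hβ : β ≠ 0) (a b : ℂ → ℂ)
    (ha : DifferentiableOn ℂ a (ball 0 ε)) (hb : DifferentiableOn ℂ b (ball 0 ε))
    (ha0 : a 0 = 0) (hb0 : b 0 = 0)
    (h : ∀ z ∈ ball (0 : ℂ) ε,
      ((b z).re * (a z).im - (b z).im * (a z).re) * (a z).im
        + β * (b z).im * (deriv a z * z).re - β * (deriv b z * z).re * (a z).im = 0) :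
    ∀ z ∈ ball (0 : ℂ) ε, b z * (deriv a z * z) - (deriv b z * z) * a z = 0 := by
  have hid : DifferentiableOn ℂ (fun z : ℂ => z) (ball 0 ε) := differentiableOn_id
  have hA : DifferentiableOn ℂ (fun z => deriv a z * z) (ball 0 ε) := (ha.deriv isOpen_ball).mul hid
  have hB : DifferentiableOn ℂ (fun z => deriv b z * z) (ball 0 ε) := (hb.deriv isOpen_ball).mul hid
  have P := aux_polar hε
    (![fun z => β * (b z * (deriv a z * z) - (deriv b z * z) * a z),
      fun z => I * (a z * b z) + β * (deriv b z * z),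
      fun z => -I * (a z * a z) - β * (deriv a z * z),
      fun z => I * a z, fun z => -I * b z, fun z => β * b z, fun z => -β * a z,
      fun _ => -(β : ℂ)])
    (![fun _ => 1, a, b, fun z => a z * b z, fun z => a z * a z,
      fun z => deriv a z * z, fun z => deriv b z * z,
      fun z => b z * (deriv a z * z) - (deriv b z * z) * a z])
    (by
      intro j
      fin_cases j
      · exact ((hb.mul hA).sub (hB.mul ha)).const_mul _
      · exact ((ha.mul hb).const_mul _).add (hB.const_mul _)
      · exact ((ha.mul ha).const_mul _).sub (hA.const_mul _)
      · exact ha.const_mul _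
      · exact hb.const_mul _
      · exact hb.const_mul _
      · exact ha.const_mul _
      · exact differentiableOn_const _)
    (by
      intro j
      fin_cases j
      · exact differentiableOn_const _
      · exact ha
      · exact hb
      · exact ha.mul hb
      · exact ha.mul ha
      · exact hA
      · exact hB
      · exact (hb.mul hA).sub (hB.mul ha))
    (by
      intro z hz
      have h1 := congrArg (fun x : ℝ => (x : ℂ)) (h z hz)
      simp only [Fin.sum_univ_eight]
      simp
      have r : ∀ w : ℂ, (w.re : ℂ) = (w + conj w) / 2 := fun w => re_eq_add_conj w
      have i : ∀ w : ℂ, (w.im : ℂ) = -I / 2 * (w - conj w) := fun w => by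
        rw [im_eq_sub_conj]; field_simp; linear_combination (w - conj w) * I_sq
      simp only [ofReal_add, ofReal_sub, ofReal_mul, ofReal_zero] at h1
      simp only [r, i, map_mul] at h1
      linear_combination 4 * I * h1
        + (-I * ((a z * conj (b z) - conj (a z) * b z) * (a z - conj (a z)))
          + β * ((b z - conj (b z)) * (deriv a z * z + conj (deriv a z) * conj z)
            - (deriv b z * z + conj (deriv b z) * conj z) * (a z - conj (a z)))) * I_sq)
  intro z hz
  have := P z hz
  simp [Fin.sum_univ_eight, ha0, hb0, hβ] at this
  simpa using this

/-- Lemma A.3 (pde2): under equations (a), (b), (c) one has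
`Q₁ ≡ Q₁(0)(1 + Q₀²)` and `a₂ ≡ Q₁(0)·a₁` on `Δ_{ε₀}`. -/
theorem stmt_12 (ε₀ β : ℝ) (hε₀ : 0 < ε₀) (hβ : β ≠ 0)
    (Q₀ Q₁ : ℂ → ℝ) (a₁ a₂ : ℂ → ℂ)
    (hQ₀an : AnalyticOnNhd ℝ Q₀ (ball (0:ℂ) ε₀))
    (hQ₁an : AnalyticOnNhd ℝ Q₁ (ball (0:ℂ) ε₀))
    (hQ₀0 : Q₀ 0 = 0)
    (ha₁hol : DifferentiableOn ℂ a₁ (ball (0:ℂ) ε₀))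
    (ha₂hol : DifferentiableOn ℂ a₂ (ball (0:ℂ) ε₀))
    (ha₁0 : a₁ 0 = 0) (ha₂0 : a₂ 0 = 0)
    (ha₁ne : ∃ z ∈ ball (0:ℂ) ε₀, a₁ z ≠ 0)
    (heqa : ∀ z ∈ ball (0:ℂ) ε₀,
      (2 * Complex.I * (β:ℂ) * z * wDeriv Q₀ z
        + Complex.I * a₁ z * (1 + (Q₀ z : ℂ) ^ 2)).re = 0)
    (heqb : ∀ z ∈ ball (0:ℂ) ε₀,
      (Complex.I * (1 + (Q₀ z : ℂ) ^ 2) * a₂ z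
        - Complex.I * (Q₁ z : ℂ) * a₁ z).re = 0)
    (heqc : ∀ z ∈ ball (0:ℂ) ε₀,
      (Complex.I * (β:ℂ) * z * wDeriv Q₁ z
        + ((Q₁ z : ℂ) / Complex.I) * (Complex.I - (Q₀ z : ℂ)) * a₁ z
        + ((1/2 : ℂ) + (Q₀ z : ℂ) / (2 * Complex.I)) *
            (-(Q₁ z : ℂ) * a₁ z + (Complex.I - (Q₀ z : ℂ)) ^ 2 * a₂ z)).re = 0) :
    ∀ z ∈ ball (0:ℂ) ε₀,
      Q₁ z = Q₁ 0 * (1 + (Q₀ z) ^ 2) ∧ a₂ z = ((Q₁ 0 : ℝ) : ℂ) * a₁ z := by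
  have hB : ∀ z ∈ ball (0:ℂ) ε₀, Q₁ z * (a₁ z).im = (1 + Q₀ z ^ 2) * (a₂ z).im := by
    intro z hz
    have h := heqb z hz
    have e : (Complex.I * (1 + (Q₀ z : ℂ) ^ 2) * a₂ z - Complex.I * (Q₁ z : ℂ) * a₁ z)
        = I * (((1 + Q₀ z ^ 2 : ℝ) : ℂ) * a₂ z - (Q₁ z : ℂ) * a₁ z) := by push_cast; ring
    rw [e, I_mul_re, sub_im, im_ofReal_mul, im_ofReal_mul] at h
    linarith
  have hA : ∀ z ∈ ball (0:ℂ) ε₀,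
      β * fderiv ℝ Q₀ z (z * I) = (1 + Q₀ z ^ 2) * (a₁ z).im := by
    intro z hz
    have h := heqa z hz
    have e : (2 * Complex.I * (β:ℂ) * z * wDeriv Q₀ z
        + Complex.I * a₁ z * (1 + (Q₀ z : ℂ) ^ 2))
        = ((2 * β : ℝ) : ℂ) * (I * z * wDeriv Q₀ z) + I * (((1 + Q₀ z ^ 2 : ℝ) : ℂ) * a₁ z) := by
      push_cast; ring
    rw [e, add_re, re_ofReal_mul, aux_theta, I_mul_re, im_ofReal_mul] at h
    linarith
  have hC : ∀ z ∈ ball (0:ℂ) ε₀,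
      β * fderiv ℝ Q₁ z (z * I) = -Q₁ z * (a₁ z).re + 2 * Q₁ z * Q₀ z * (a₁ z).im
        + (1 + Q₀ z ^ 2) * (a₂ z).re := by
    intro z hz
    have h := heqc z hz
    have e : (Complex.I * (β:ℂ) * z * wDeriv Q₁ z
        + ((Q₁ z : ℂ) / Complex.I) * (Complex.I - (Q₀ z : ℂ)) * a₁ z
        + ((1/2 : ℂ) + (Q₀ z : ℂ) / (2 * Complex.I)) *
            (-(Q₁ z : ℂ) * a₁ z + (Complex.I - (Q₀ z : ℂ)) ^ 2 * a₂ z))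
        = (β : ℂ) * (I * z * wDeriv Q₁ z) + (Q₁ z : ℂ) * ((1 + I * (Q₀ z : ℂ)) * a₁ z)
          + ((1/2 : ℝ) : ℂ) * (-((Q₁ z : ℂ) * ((1 - I * (Q₀ z : ℂ)) * a₁ z))
            - ((1 + Q₀ z ^ 2 : ℝ) : ℂ) * ((1 + I * (Q₀ z : ℂ)) * a₂ z)) := by
      have i1 : (Q₁ z : ℂ) / I = - I * Q₁ z := by rw [div_I]; ring
      have i2 : (Q₀ z : ℂ) / (2 * I) = - I * Q₀ z / 2 := by
        field_simp; linear_combination (Q₀ z : ℂ) * I_sq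
      rw [i1, i2]
      push_cast
      have := I_sq
      have h3 : I ^ 3 = -I := by rw [pow_succ, I_sq]; ring
      ring_nf
      simp only [I_sq, h3]
      ring
    rw [e, add_re, add_re, re_ofReal_mul, aux_theta, re_ofReal_mul, re_ofReal_mul, sub_re, neg_re,
      re_ofReal_mul, re_ofReal_mul] at h
    simp at h
    have hb := hB z hz
    linear_combination 2 * h + Q₀ z * hb
  have hpos : ∀ z, (1 + Q₀ z ^ 2) ≠ 0 := fun z => by positivity
  have hnh : ∀ z ∈ ball (0:ℂ) ε₀, ball (0:ℂ) ε₀ ∈ 𝓝 z := fun z hz => isOpen_ball.mem_nhds hz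
  have key := aux_hol hε₀ hβ a₁ a₂ ha₁hol ha₂hol ha₁0 ha₂0 (by
    intro z hz
    have d0 := aux_dirR (z * I) (hQ₀an z hz).differentiableAt
    have d1 := aux_dirR (z * I) (hQ₁an z hz).differentiableAt
    have e1 := aux_im (aux_dirC (z * I) (ha₁hol.differentiableAt (hnh z hz)))
    have e2 := aux_im (aux_dirC (z * I) (ha₂hol.differentiableAt (hnh z hz)))
    have l := d1.mul e1
    have r := ((d0.pow 2).const_add 1).mul e2
    have r' := r.congr_of_eventuallyEq (f₁ := _) (by
      filter_upwards [aux_ev hz (z * I)] with t ht using hB _ ht)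
    have u := l.unique r'
    simp only [← mul_assoc, mul_I_im] at u
    simp at u
    have hb := hB z hz
    have ha := hA z hz
    have hc := hC z hz
    apply mul_left_cancel₀ (hpos z)
    rw [mul_re (deriv a₁ z) z, mul_re (deriv a₂ z) z]
    linear_combination β * (a₁ z).im * u - (a₁ z).im ^ 2 * hc
      + 2 * Q₀ z * (a₁ z).im * (a₂ z).im * ha
      + ((a₁ z).re * (a₁ z).im - β * ((deriv a₁ z).re * z.re - (deriv a₁ z).im * z.im)
        - 2 * Q₀ z * (a₁ z).im ^ 2) * hb)
  have hana : AnalyticOnNhd ℂ a₁ (ball 0 ε₀) := ha₁hol.analyticOnNhd isOpen_ball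
  have hanb : AnalyticOnNhd ℂ a₂ (ball 0 ε₀) := ha₂hol.analyticOnNhd isOpen_ball
  have hconn : IsPreconnected (ball (0:ℂ) ε₀) := (convex_ball _ _).isPreconnected
  have h0 : (0:ℂ) ∈ ball (0:ℂ) ε₀ := mem_ball_self hε₀
  -- open mapping
  have hopen : ∀ z ∈ ball (0:ℂ) ε₀, 𝓝 (a₁ z) ≤ map a₁ (𝓝 z) := by
    intro z hz
    refine (hana z hz).eventually_constant_or_nhds_le_map_nhds.resolve_left fun hc => ?_
    have := hana.eqOn_of_preconnected_of_eventuallyEq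
      (analyticOnNhd_const (v := a₁ z)) hconn hz hc
    obtain ⟨w, hw, hw'⟩ := ha₁ne
    apply hw'
    rw [this hw, ← this h0, ha₁0]
  -- proportionality
  obtain ⟨c, hc⟩ : ∃ c : ℂ, ∀ z ∈ ball (0:ℂ) ε₀, a₂ z = c * a₁ z := by
    obtain ⟨w, hw, hw'⟩ := ha₁ne
    have hw0 : w ≠ 0 := by rintro rfl; exact hw' ha₁0
    have hev : ∀ᶠ z in 𝓝 w, z ∈ ball (0:ℂ) ε₀ ∧ a₁ z ≠ 0 ∧ z ≠ 0 :=
      Filter.Eventually.and (hnh w hw)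
        (((hana w hw).continuousAt.eventually_ne hw').and (eventually_ne_nhds hw0))
    obtain ⟨δ, hδ, hs⟩ := Metric.eventually_nhds_iff_ball.1 hev
    obtain ⟨c, hc⟩ := isOpen_ball.exists_is_const_of_deriv_eq_zero
      (convex_ball w δ).isPreconnected (f := fun z => a₂ z / a₁ z)
      (fun z hz => ((ha₂hol.differentiableAt (hnh z (hs z hz).1)).div
        (ha₁hol.differentiableAt (hnh z (hs z hz).1)) (hs z hz).2.1).differentiableWithinAt)
      (fun z hz => by
        obtain ⟨p, q, r⟩ := hs z hz
        have := ((ha₂hol.differentiableAt (hnh z p)).hasDerivAt.div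
          (ha₁hol.differentiableAt (hnh z p)).hasDerivAt q).deriv
        refine this.trans ?_
        have k := key z p
        have : deriv a₂ z * a₁ z - a₂ z * deriv a₁ z = 0 := by
          apply mul_left_cancel₀ r
          linear_combination -k
        simp [this])
    refine ⟨c, hanb.eqOn_of_preconnected_of_eventuallyEq
      (g := fun z => c * a₁ z) (analyticOnNhd_const.mul hana) hconn hw ?_⟩
    filter_upwards [ball_mem_nhds w hδ] with z hz
    have := hc z hz
    rw [← this]
    field_simp [(hs z hz).2.1]
  -- c real
  have hcim : c.im = 0 := by
    have hm := hopen 0 h0 (image_mem_map (hnh 0 h0))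
    rw [ha₁0] at hm
    obtain ⟨δ, hδ, hs⟩ := Metric.mem_nhds_iff.1 hm
    have : ((δ / 2 : ℝ) : ℂ) ∈ ball (0:ℂ) δ := by
      rw [mem_ball_zero_iff, norm_real, Real.norm_eq_abs, abs_of_pos (by positivity)]
      linarith
    obtain ⟨z, hz, e⟩ := hs this
    have hb := hB z hz
    rw [hc z hz, e, im_mul_ofReal, ofReal_im] at hb
    have h1 := hpos z
    have : δ / 2 ≠ 0 := by positivity
    simpa [h1, this] using hb.symm
  have hR : ∀ z ∈ ball (0:ℂ) ε₀, Q₁ z = c.re * (1 + Q₀ z ^ 2) := by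
    intro z hz
    by_contra hne
    have hcont : ContinuousAt (fun z => Q₁ z - c.re * (1 + Q₀ z ^ 2)) z := by
      have := (hQ₁an z hz).continuousAt
      have := (hQ₀an z hz).continuousAt
      fun_prop
    have hev := hcont.eventually_ne (sub_ne_zero.2 hne)
    have him : ∀ᶠ w in 𝓝 z, (a₁ w).im = 0 := by
      filter_upwards [hev, hnh z hz] with w h1 h2
      have hb := hB w h2
      rw [hc w h2, mul_im, hcim] at hb
      have : (Q₁ w - c.re * (1 + Q₀ w ^ 2)) * (a₁ w).im = 0 := by linear_combination hb
      exact (mul_eq_zero.1 this).resolve_left h1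
    have hm : ∀ᶠ y in 𝓝 (a₁ z), y.im = 0 := hopen z hz (Filter.eventually_map.2 him)
    have l : Tendsto (fun t : ℝ => a₁ z + (t : ℂ) * I) (𝓝[>] 0) (𝓝 (a₁ z)) := by
      have := (aux_line (a₁ z) I).continuousAt.tendsto
      simp at this
      exact this.mono_left nhdsWithin_le_nhds
    obtain ⟨t, ht, ht'⟩ := ((l.eventually hm).and self_mem_nhdsWithin).exists
    have hz0 := him.self_of_nhds
    simp [hz0] at ht
    simp [ht] at ht'
  have hc0 : Q₁ 0 = c.re := by simpa [hQ₀0] using hR 0 h0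
  intro z hz
  refine ⟨by rw [hc0]; exact hR z hz, ?_⟩
  rw [hc z hz, hc0]
  congr 1
  apply Complex.ext <;> simp [hcim]
end

section
/- Let M be a germ at 0 of a real hypersurface in ℂ² defined by ρ(z₁,z₂) = Re z₁ + P(z₂) + f(z₂, Im z₁) = 0, where f is real analytic in a neighborhood of 0 in ℂ×ℝ with f(z₂,0) ≡ 0, P is C^∞-smooth with P(z₂) > 0 for all z₂ ≠ 0 in its domain and P(0) = 0, and P vanishes to infinite order at z₂ = 0. If H = h₁ ∂/∂z₁ + h₂ ∂/∂z₂ is a holomorphic vector field germ at (0,0), not identically zero, with h₁(0,0) = h₂(0,0) = 0, tangent to M, then h₁(0,z₂) ≡ 0 on a neighborhood of 0, and h₂(0,z₂) = iβz₂ + O(z₂²) as z₂ → 0 for some β ∈ ℝ∖{0}. -/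
open Filter Set Metric Complex

lemma aux_deriv_incr {φ : ℝ → ℝ} {d : ℝ} (h : HasDerivAt φ d 0) (hd : 0 < d) :
    ∀ᶠ s in nhdsWithin (0:ℝ) (Ioi 0), φ 0 < φ s := by
  have h1 := h.hasDerivWithinAt (s := Ioi 0)
  rw [hasDerivWithinAt_iff_tendsto_slope' (by simp)] at h1
  filter_upwards [h1.eventually (lt_mem_nhds hd), self_mem_nhdsWithin] with s hs hs0
  have hs0 : 0 < s := hs0
  rw [slope_def_field, sub_zero] at hs
  have := (div_pos_iff_of_pos_right hs0).1 hs
  linarith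

/-- maximum principle -/
lemma aux_max (K : Set ℂ) (hK : IsCompact K) (Q : ℂ → ℝ) (hQ : ContinuousOn Q K) (h0 : Q 0 = 0)
    (p₀ : ℂ) (hp₀ : p₀ ∈ K) (hQp : 0 < Q p₀)
    (h : ∀ p ∈ K, p ≠ 0 → ∃ q ∈ K, Q p < Q q) : False := by
  obtain ⟨p, hp, hmax⟩ := hK.exists_isMaxOn ⟨p₀, hp₀⟩ hQ
  by_cases hp0 : p = 0
  · have := hmax hp₀
    simp only [mem_ofPred_eq, hp0, h0] at this
    linarith
  · obtain ⟨q, hq, hlt⟩ := h p hp hp0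
    have := hmax hq
    simp only [mem_ofPred_eq] at this
    linarith

lemma aux_line_s15 (P : ℂ → ℝ) (p v : ℂ) (h : DifferentiableAt ℝ P p) :
    HasDerivAt (fun s : ℝ => P (p - s * v)) (-(fderiv ℝ P p v)) 0 := by
  have h1 : HasDerivAt (fun s : ℝ => p - (s:ℂ) * v) (-v) 0 := by
    have := ((Complex.ofRealCLM.hasDerivAt (x := (0:ℝ))).mul_const v).const_sub p
    simpa using this
  have h2 : HasFDerivAt P (fderiv ℝ P p) (p - ((0:ℝ):ℂ) * v) := by simpa using h.hasFDerivAt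
  have := h2.comp_hasDerivAt (0:ℝ) h1
  simpa using! this

lemma aux_disk (r : ℝ) (hr : 0 < r) (P : ℂ → ℝ)
    (hPd : ∀ z ∈ ball (0:ℂ) r, DifferentiableAt ℝ P z)
    (hP0 : P 0 = 0)
    (hPpos : ∀ z ∈ ball (0:ℂ) r, z ≠ 0 → 0 < P z)
    (hPflat : ∀ n : ℕ, P =o[nhds (0:ℂ)] fun z => ‖z‖ ^ n)
    (u : ℂ → ℂ) (hu : ContinuousAt u 0) (hu0 : 0 < (u 0).re) (C : ℝ)
    (h : ∀ᶠ z in nhds (0:ℂ), fderiv ℝ P z (z * u z) ≤ C * P z) : False := by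
  have hre : ∀ᶠ z in nhds (0:ℂ), (u 0).re / 2 < (u z).re := by
    have : ContinuousAt (fun z => (u z).re) 0 := Complex.continuous_re.continuousAt.comp hu
    exact this.eventually (lt_mem_nhds (by linarith))
  obtain ⟨δ, hδ, hball⟩ := Metric.eventually_nhds_iff_ball.1 
    ((h.and hre).and (ball_mem_nhds (0:ℂ) hr))
  obtain ⟨n, hn⟩ := exists_nat_gt (C / (u 0).re)
  rw [div_lt_iff₀ hu0] at hn
  set δ' := δ / 2 with hδ'
  have hsub : ∀ z ∈ closedBall (0:ℂ) δ', z ∈ ball (0:ℂ) δ := fun z hz => 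
    closedBall_subset_ball (by linarith) hz
  have hδ'0 : 0 < δ' := by linarith
  have hp₀ : (δ' : ℂ) ∈ closedBall (0:ℂ) δ' := by simp [abs_of_pos hδ'0]
  have hp₀0 : (δ' : ℂ) ≠ 0 := by exact_mod_cast hδ'0.ne'
  refine aux_max (closedBall 0 δ') (isCompact_closedBall _ _) (fun z => P z / (‖z‖^(2*n))) ?_ 
    (by simp [hP0]) (δ' : ℂ) hp₀ ?_ ?_
  · intro z hz
    apply ContinuousAt.continuousWithinAt
    by_cases hz0 : z = 0
    · subst hz0
      rw [ContinuousAt]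
      simp only [hP0, zero_div]
      exact (hPflat (2*n)).tendsto_div_nhds_zero
    · exact (hPd z (hball z (hsub z hz)).2).continuousAt.div (by fun_prop) (by positivity)
  · have := hPpos _ (hball _ (hsub _ hp₀)).2 hp₀0
    positivity
  · intro p hp hp0
    have hb := hball p (hsub p hp)
    have hPp := hPpos p hb.2 hp0
    set w := u p with hw
    have hd1 := aux_line_s15 P p (p * w) (hPd p hb.2)
    have hd2 : HasDerivAt (fun s : ℝ => Complex.normSq (1 - s * w)) (-2 * w.re) 0 := by
      have : (fun s : ℝ => Complex.normSq (1 - s * w)) = 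
        fun s : ℝ => (1 - s * w.re)^2 + (s*w.im)^2 := by
        ext s; simp [Complex.normSq_apply]; ring
      rw [this]
      have h1 : HasDerivAt (fun s : ℝ => (1 - s * w.re)) (-w.re) 0 := by
        simpa using ((hasDerivAt_id (0:ℝ)).mul_const w.re).const_sub 1
      have h2 : HasDerivAt (fun s : ℝ => s * w.im) (w.im) 0 := by
        simpa using ((hasDerivAt_id (0:ℝ)).mul_const w.im)
      have h3 := (h1.pow 2).add (h2.pow 2)
      refine (h3.congr_deriv ?_)
      simp
    have hd3 := hd1.div (hd2.pow n) (by simp)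
    have hpos : 0 < -(fderiv ℝ P p (p * w)) + P p * (n * (2 * w.re)) := by
      have h1 := hb.1.1
      have h2 := hb.1.2
      have : C < n * (2 * w.re) := by
        have : (n:ℝ) * (u 0).re ≤ n * (2 * w.re) := by gcongr; linarith
        linarith
      nlinarith
    have hinc := aux_deriv_incr hd3 (by
      convert hpos using 1
      simp)
    have hnear : ∀ᶠ s : ℝ in nhdsWithin (0:ℝ) (Ioi 0), 1 > Complex.normSq (1 - s * w) := by
      have := aux_deriv_incr hd2.neg (by simp; linarith [hb.1.2])
      simpa using this
    have hnear2 : ∀ᶠ s : ℝ in nhdsWithin (0:ℝ) (Ioi 0), 0 < Complex.normSq (1 - s * w) := by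
      apply nhdsWithin_le_nhds
      exact hd2.continuousAt.eventually (lt_mem_nhds (by simp))
    obtain ⟨s, h1, h2, h3⟩ := (hinc.and (hnear.and hnear2)).exists
    have hnorm : ‖p - s * (p*w)‖ = ‖p‖ * ‖1 - s * w‖ := by
      rw [← norm_mul]; congr 1; ring
    refine ⟨p - s * (p * w), ?_, ?_⟩
    · rw [mem_closedBall_zero_iff, hnorm]
      rw [mem_closedBall_zero_iff] at hp
      have : ‖1 - s * w‖ ≤ 1 := by
        rw [Complex.normSq_eq_norm_sq] at h2
        nlinarith [norm_nonneg (1 - s * w)]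
      calc _ ≤ δ' * 1 := by gcongr
        _ = _ := by ring
    · simp only [hnorm, mul_pow, pow_mul]
      rw [← Complex.normSq_eq_norm_sq (1 - s * w)]
      have hpp : 0 < (‖p‖^2)^n := by positivity
      simp at h1
      rw [mul_comm ((‖p‖^2)^n), ← div_div]
      gcongr

/-- sector lemma, normalized -/
lemma aux_sector0 (r : ℝ) (hr : 0 < r) (P : ℂ → ℝ)
    (hPd : ∀ z ∈ ball (0:ℂ) r, DifferentiableAt ℝ P z)
    (hP0 : P 0 = 0)
    (hPpos : ∀ z ∈ ball (0:ℂ) r, z ≠ 0 → 0 < P z)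
    (n : ℕ) (hn : 1 ≤ n)
    (u : ℂ → ℂ) (hu : ContinuousAt u 0) (c : ℝ) (hc : 0 < c) (hu0 : u 0 = c) (C : ℝ)
    (h : ∀ᶠ z in nhds (0:ℂ), fderiv ℝ P z (z ^ (n+1) * u z) ≤ C * ‖z‖ ^ (n+1) * P z) : False := by
  -- choice of ε
  have hA : ∀ᶠ q : ℝ × ℂ in nhds ((0:ℝ), (c:ℂ)), c/2 < ((1 + q.1 * I)^(n+1) * q.2).re := by
    have : ContinuousAt (fun q : ℝ × ℂ => ((1 + q.1 * I)^(n+1) * q.2).re) ((0:ℝ), (c:ℂ)) := by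
      fun_prop
    exact this.eventually (lt_mem_nhds (by simp; linarith))
  rw [nhds_prod_eq] at hA
  obtain ⟨pa, hpa, pb, hpb, hab⟩ := eventually_prod_iff.1 hA
  obtain ⟨ε₀, hε₀, hball⟩ := Metric.eventually_nhds_iff_ball.1 hpa
  have hder : HasDerivAt (fun s : ℝ => ((1 + s * I)^n).im) n 0 := by
    have h1 : HasDerivAt (fun s : ℝ => (1 + (s:ℂ) * I)) I 0 := by
      have := ((Complex.ofRealCLM.hasDerivAt (x := (0:ℝ))).mul_const I).const_add 1
      simpa using this
    have h2 := h1.pow n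
    have h3 := (Complex.imCLM.hasFDerivAt).comp_hasDerivAt (0:ℝ) h2
    simpa using! h3
  have hinc := aux_deriv_incr hder (by exact_mod_cast hn)
  have hlt : ∀ᶠ s in nhdsWithin (0:ℝ) (Ioi 0), s ∈ Ioo (0:ℝ) (min ε₀ 1) := 
    Ioo_mem_nhdsGT (by positivity)
  obtain ⟨ε, hεim, hε0, hε1⟩ := (hinc.and hlt).exists
  simp only [ofReal_zero, zero_mul, add_zero, one_pow, one_im] at hεim
  have hεε₀ : ε < ε₀ := lt_of_lt_of_le hε1 (min_le_left _ _)
  have hεone : ε < 1 := lt_of_lt_of_le hε1 (min_le_right _ _)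
  have hB1 : ∀ᶠ v : ℂ in nhds (c:ℂ), 0 < ((1 + ε * I)^n * v).im := by
    have : ContinuousAt (fun v : ℂ => ((1 + ε * I)^n * v).im) (c:ℂ) := by fun_prop
    exact this.eventually (lt_mem_nhds (by simp; positivity))
  have hconj : ((1 - ε * I)^n).im = - ((1 + ε * I)^n).im := by
    rw [← Complex.conj_im]; congr 1; simp [sub_eq_add_neg]
  have hB2 : ∀ᶠ v : ℂ in nhds (c:ℂ), ((1 - ε * I)^n * v).im < 0 := by
    have : ContinuousAt (fun v : ℂ => ((1 - ε * I)^n * v).im) (c:ℂ) := by fun_prop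
    exact this.eventually (gt_mem_nhds (by 
      simp only [mul_im, ofReal_im, ofReal_re, mul_zero, zero_add, hconj]; nlinarith))
  rw [← hu0] at hpb hB1 hB2
  have hu' : Tendsto u (nhds 0) (nhds (u 0)) := hu
  obtain ⟨δ, hδ, hδb⟩ := Metric.eventually_nhds_iff_ball.1 
    ((h.and (ball_mem_nhds (0:ℂ) hr)).and 
      ((hu'.eventually hpb).and ((hu'.eventually hB1).and (hu'.eventually hB2))))
  set δ' := δ / 3 with hδ'
  have hδ'0 : 0 < δ' := by positivity
  set K : Set ℂ := {p | p.re ≤ δ' ∧ p.im ≤ ε * p.re ∧ - p.im ≤ ε * p.re} with hKdef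
  have hre0 : ∀ p ∈ K, 0 ≤ p.re := by
    rintro p ⟨h1, h2, h3⟩
    by_contra hcon
    nlinarith
  have hnorm : ∀ p ∈ K, ‖p‖ ≤ 2 * p.re := by
    intro p hp
    have h0 := hre0 p hp
    obtain ⟨h1, h2, h3⟩ := hp
    have := Complex.norm_le_abs_re_add_abs_im p
    rw [abs_of_nonneg h0] at this
    have : |p.im| ≤ p.re := by rw [abs_le]; constructor <;> nlinarith
    linarith
  have hKb : ∀ p ∈ K, p ∈ ball (0:ℂ) δ := by
    intro p hp
    rw [mem_ball_zero_iff]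
    have := hnorm p hp
    have := hp.1
    linarith
  have hKc : IsCompact K := by
    apply Metric.isCompact_of_isClosed_isBounded
    · have c1 : IsClosed {p : ℂ | p.re ≤ δ'} := isClosed_le (by fun_prop) (by fun_prop)
      have c2 : IsClosed {p : ℂ | p.im ≤ ε * p.re} := isClosed_le (by fun_prop) (by fun_prop)
      have c3 : IsClosed {p : ℂ | - p.im ≤ ε * p.re} := isClosed_le (by fun_prop) (by fun_prop)
      exact c1.inter (c2.inter c3)
    · exact isBounded_ball.subset hKb
  -- N
  obtain ⟨N, hN⟩ := exists_gt (max 0 (C * 2^(n+1) / (c / 2)))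
  have hN0 : 0 < N := lt_of_le_of_lt (le_max_left _ _) hN
  have hN1 : C * 2^(n+1) < N * (c/2) := by
    rw [← div_lt_iff₀ (by positivity)]; exact lt_of_le_of_lt (le_max_right _ _) hN
  have hp₀ : (δ' : ℂ) ∈ K := by
    refine ⟨by simp, ?_, ?_⟩ <;> simp <;> positivity
  have hp₀0 : (δ' : ℂ) ≠ 0 := by exact_mod_cast hδ'0.ne'
  refine aux_max K hKc (fun z => P z * Real.exp (- N * z.re)) ?_ 
    (by simp [hP0]) (δ' : ℂ) hp₀ ?_ ?_
  · intro z hz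
    apply ContinuousAt.continuousWithinAt
    exact (hPd z (hδb z (hKb z hz)).1.2).continuousAt.mul (by fun_prop)
  · have := hPpos _ (hδb _ (hKb _ hp₀)).1.2 hp₀0
    positivity
  · intro p hp hp0
    obtain ⟨⟨hb1, hb2⟩, hb3, hb4, hb5⟩ := hδb p (hKb p hp)
    have hPp := hPpos p hb2 hp0
    have hx : 0 < p.re := by
      have h1 := hnorm p hp
      have h2 : 0 < ‖p‖ := norm_pos_iff.2 hp0
      linarith
    set x := p.re with hxdef
    set σ := p.im / x with hσ
    have hpx : p = x * (1 + σ * I) := by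
      apply Complex.ext
      · simp [hxdef]
      · simp [hσ]; field_simp
    have hσε : |σ| ≤ ε := by
      rw [hσ, abs_le]
      obtain ⟨h1, h2, h3⟩ := hp
      constructor
      · rw [le_div_iff₀ hx]; linarith
      · rw [div_le_iff₀ hx]; linarith
    set V := p^(n+1) * u p with hV
    have hVx : V = (x^(n+1) : ℝ) * ((1 + σ * I)^(n+1) * u p) := by
      rw [hV]; nth_rewrite 1 [hpx]; rw [mul_pow]; push_cast; ring
    have hVre : x^(n+1) * (c/2) < V.re := by
      rw [hVx, Complex.re_ofReal_mul]
      gcongr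
      exact hab (x := σ) (hball σ (by simpa using lt_of_le_of_lt hσε hεε₀)) hb3
    have hd1 := aux_line_s15 P p V (hPd p hb2)
    have hd2 : HasDerivAt (fun s : ℝ => Real.exp (- N * (p - s * V).re)) 
        (Real.exp (- N * x) * (N * V.re)) 0 := by
      have h1 : HasDerivAt (fun s : ℝ => - N * (p - s * V).re) (N * V.re) 0 := by
        have : (fun s : ℝ => - N * (p - s * V).re) = fun s => -N * x + s * (N * V.re) := by
          ext s; simp [hxdef]; ring
        rw [this]
        simpa using ((hasDerivAt_id (0:ℝ)).mul_const (N * V.re)).const_add (-N*x)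
      simpa [hxdef] using h1.exp
    have hd3 := hd1.mul hd2
    have hinc := aux_deriv_incr hd3 (by
      have hxn : 0 < x^(n+1) := by positivity
      have e1 : C * ‖p‖^(n+1) ≤ |C| * 2^(n+1) * x^(n+1) := by
        calc C * ‖p‖^(n+1) ≤ |C| * (2 * x)^(n+1) := by
              gcongr
              · exact le_abs_self C
              · exact hnorm p hp
          _ = _ := by ring
      have e2 : C * ‖p‖^(n+1) < N * V.re := by
        by_cases hC : 0 ≤ C
        · rw [abs_of_nonneg hC] at e1
          calc _ ≤ _ := e1
            _ ≤ N * (c/2) * x^(n+1) := by gcongr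
            _ = N * (x^(n+1) * (c/2)) := by ring
            _ < _ := by gcongr
        · push Not at hC
          have : C * ‖p‖^(n+1) ≤ 0 := mul_nonpos_of_nonpos_of_nonneg hC.le (by positivity)
          have : 0 < V.re := lt_trans (by positivity) hVre
          have : 0 < N * V.re := by positivity
          linarith
      have e3 : fderiv ℝ P p V < P p * (N * V.re) := by
        calc _ ≤ _ := hb1
          _ < N * V.re * P p := by gcongr
          _ = _ := by ring
      simp only [ofReal_zero, zero_mul, sub_zero]
      have he := Real.exp_pos (-N * x)
      rw [← hxdef]
      nlinarith)
    have hVpos : 0 < V.re := lt_trans (by positivity) hVre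
    -- staying inside
    have hin1 : ∀ᶠ s : ℝ in nhdsWithin (0:ℝ) (Ioi 0), (p - s * V).re ≤ δ' := by
      filter_upwards [self_mem_nhdsWithin] with s hs
      have hs : 0 < s := hs
      have := hp.1
      simp
      nlinarith
    have key : ∀ a b : ℝ, 0 ≤ a → (a = 0 → 0 < b) → 
        ∀ᶠ s : ℝ in nhdsWithin (0:ℝ) (Ioi 0), 0 ≤ a + s * b := by
      intro a b ha hb
      rcases ha.eq_or_lt with h0 | h0
      · filter_upwards [self_mem_nhdsWithin] with s hs
        have hs : 0 < s := hs
        have := hb h0.symm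
        rw [← h0]; positivity
      · apply nhdsWithin_le_nhds
        have : ContinuousAt (fun s : ℝ => a + s * b) 0 := by fun_prop
        filter_upwards [this.eventually (lt_mem_nhds (by simpa using h0))] with s hs using hs.le
    have hin2 : ∀ᶠ s : ℝ in nhdsWithin (0:ℝ) (Ioi 0), (p - s * V).im ≤ ε * (p - s * V).re := by
      have := key (ε * p.re - p.im) (V.im - ε * V.re) (by linarith [hp.2.1]) (by
        intro h0
        have hσ' : σ = ε := by rw [hσ]; field_simp; linarith
        have : V.im - ε * V.re = x^(n+1) * (1 + ε^2) * ((1 + ε * I)^n * u p).im := by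
          rw [hVx, hσ', Complex.re_ofReal_mul, Complex.im_ofReal_mul]
          have hre : (((1 + (ε:ℂ) * I)^(n+1) * u p)) =
            ((1 + (ε:ℂ) * I)^n * u p) * (1 + (ε:ℂ) * I) := by ring
          rw [hre]
          generalize (1 + (ε:ℂ) * I)^n * u p = W
          simp
          ring
        rw [this]; positivity)
      filter_upwards [this] with s hs
      simp
      linarith
    have hin3 : ∀ᶠ s : ℝ in nhdsWithin (0:ℝ) (Ioi 0), -(p - s * V).im ≤ ε * (p - s * V).re := by
      have := key (ε * p.re + p.im) (-V.im - ε * V.re) (by linarith [hp.2.2]) (by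
        intro h0
        have hσ' : σ = -ε := by rw [hσ]; field_simp; linarith
        have : -V.im - ε * V.re = x^(n+1) * (1 + ε^2) * (-((1 - ε * I)^n * u p).im) := by
          rw [hVx, hσ', Complex.re_ofReal_mul, Complex.im_ofReal_mul]
          have : (1 + ((-ε:ℝ):ℂ) * I) = 1 - ε * I := by push_cast; ring
          rw [this]
          have hre : (((1 - (ε:ℂ) * I)^(n+1) * u p)) =
            ((1 - (ε:ℂ) * I)^n * u p) * (1 - (ε:ℂ) * I) := by ring
          rw [hre]
          generalize (1 - (ε:ℂ) * I)^n * u p = W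
          simp
          ring
        rw [this]
        have : 0 < (-((1 - ε * I)^n * u p).im) := by linarith
        positivity)
      filter_upwards [this] with s hs
      simp
      linarith
    obtain ⟨s, h1, h2, h3, h4⟩ := (hinc.and (hin1.and (hin2.and hin3))).exists
    exact ⟨p - s * V, ⟨h2, h3, h4⟩, by simpa using h1⟩

lemma aux_unit_root (n : ℕ) (hn : n ≠ 0) (b : ℂ) (hb : b ≠ 0) :
    ∃ ω : ℂ, ‖ω‖ = 1 ∧ ω ^ n * b = (‖b‖ : ℂ) := by
  obtain ⟨ω, hω⟩ := IsAlgClosed.exists_pow_nat_eq ((‖b‖ : ℂ) / b) (Nat.pos_of_ne_zero hn)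
  have hb' : ‖b‖ ≠ 0 := norm_ne_zero_iff.2 hb
  refine ⟨ω, ?_, ?_⟩
  · have : ‖ω‖ ^ n = 1 := by rw [← norm_pow, hω]; simp [hb']
    exact (pow_eq_one_iff_of_nonneg (norm_nonneg _) hn).1 this
  · rw [hω]; field_simp

/-- sector lemma -/
lemma aux_sector (r : ℝ) (hr : 0 < r) (P : ℂ → ℝ)
    (hPd : ∀ z ∈ ball (0:ℂ) r, DifferentiableAt ℝ P z)
    (hP0 : P 0 = 0)
    (hPpos : ∀ z ∈ ball (0:ℂ) r, z ≠ 0 → 0 < P z)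
    (l : ℕ) (hl : 2 ≤ l)
    (u : ℂ → ℂ) (hu : ContinuousAt u 0) (hu0 : u 0 ≠ 0) (C : ℝ)
    (h : ∀ᶠ z in nhds (0:ℂ), fderiv ℝ P z (z ^ l * u z) ≤ C * ‖z‖ ^ l * P z) : False := by
  obtain ⟨n, rfl⟩ : ∃ n, l = n + 1 := ⟨l - 1, by omega⟩
  obtain ⟨ω, hω1, hω2⟩ := aux_unit_root n (by omega) (u 0) hu0
  have hω0 : ω ≠ 0 := by intro h; simp [h] at hω1
  have ht : Tendsto (fun y : ℂ => ω * y) (nhds 0) (nhds 0) := by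
    have : Continuous (fun y : ℂ => ω * y) := by fun_prop
    simpa using this.tendsto 0
  have hmem : ∀ y ∈ ball (0:ℂ) r, ω * y ∈ ball (0:ℂ) r := by
    intro y hy; simpa [hω1] using hy
  refine aux_sector0 r hr (fun y => P (ω * y)) (fun y hy => ?_) (by simpa using hP0) 
    (fun y hy hy0 => hPpos _ (hmem y hy) (mul_ne_zero hω0 hy0)) n (by omega) 
    (fun y => ω ^ n * u (ω * y)) ?_ ‖u 0‖ (norm_pos_iff.2 hu0) (by simpa using hω2) C ?_
  · have := hPd _ (hmem y hy)
    exact DifferentiableAt.comp y (g := P) (f := fun y => ω * y) this (by fun_prop)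
  · have : ContinuousAt (fun y => u (ω * y)) 0 := by
      refine ContinuousAt.comp (g := u) (f := fun y => ω * y) ?_ (by fun_prop)
      simpa using hu
    exact continuousAt_const.mul this
  · filter_upwards [ht.eventually h, ball_mem_nhds (0:ℂ) hr] with y hy hyr
    have hd := (hPd _ (hmem y hyr)).hasFDerivAt
    have h1 : HasFDerivAt (fun y : ℂ => ω * y) (ω • ContinuousLinearMap.id ℝ ℂ) y := by
      simpa using (hasFDerivAt_id (𝕜 := ℝ) y).const_mul ω
    have h2 := (hd.comp y h1).fderiv
    have h3 : (fun y => P (ω * y)) = P ∘ (fun y => ω * y) := rfl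
    rw [h3, h2]
    simp only [ContinuousLinearMap.comp_apply, ContinuousLinearMap.smul_apply, 
      ContinuousLinearMap.id_apply, Function.comp]
    have h4 : ω • (y ^ (n+1) * (ω^n * u (ω * y))) = (ω * y)^(n+1) * u (ω * y) := by
      simp only [smul_eq_mul]; ring
    rw [h4]
    simpa [hω1] using hy


lemma aux_taylor (s : ℝ) (hs : 0 < s) (h : ℂ × ℂ → ℂ)
    (hh : DifferentiableOn ℂ h (ball (0 : ℂ × ℂ) s)) :
    ∃ ρ : ℝ, 0 < ρ ∧ ρ < s ∧ ∃ c : ℕ → ℂ → ℂ,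
      (∀ j, DifferentiableOn ℂ (c j) (ball 0 ρ)) ∧
      (∀ ζ ∈ ball (0:ℂ) ρ, ∀ z ∈ ball (0:ℂ) ρ, HasSum (fun j => c j z * ζ ^ j) (h (ζ, z))) ∧
      (∀ n : ℕ, ∃ C : ℝ, ∀ ζ ∈ ball (0:ℂ) (ρ/2), ∀ z ∈ ball (0:ℂ) ρ,
        ‖h (ζ, z) - ∑ j ∈ Finset.range n, c j z * ζ ^ j‖ ≤ C * ‖ζ‖ ^ n) := by
  obtain ⟨ρ, hρ⟩ : ∃ ρ, ρ = s / 2 := ⟨_, rfl⟩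
  have hρ0 : 0 < ρ := by rw [hρ]; positivity
  have hmem : ∀ ζ ∈ closedBall (0:ℂ) ρ, ∀ z ∈ closedBall (0:ℂ) ρ, (ζ, z) ∈ ball (0:ℂ × ℂ) s := by
    intro ζ hζ z hz
    rw [mem_closedBall_zero_iff] at hζ hz
    rw [mem_ball_zero_iff, Prod.norm_def]
    simp only [sup_lt_iff]
    constructor <;> linarith
  obtain ⟨M, hM⟩ : ∃ M, ∀ ζ ∈ closedBall (0:ℂ) ρ, ∀ z ∈ closedBall (0:ℂ) ρ, ‖h (ζ, z)‖ ≤ M := by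
    have hc : IsCompact (closedBall (0:ℂ) ρ ×ˢ closedBall (0:ℂ) ρ) :=
      (isCompact_closedBall _ _).prod (isCompact_closedBall _ _)
    obtain ⟨M, hM⟩ := hc.exists_bound_of_continuousOn (f := h) 
      (hh.continuousOn.mono (fun q hq => hmem q.1 hq.1 q.2 hq.2))
    exact ⟨M, fun ζ hζ z hz => hM (ζ, z) ⟨hζ, hz⟩⟩
  have hM0 : 0 ≤ M := le_trans (norm_nonneg _) 
    (hM 0 (mem_closedBall_self hρ0.le) 0 (mem_closedBall_self hρ0.le))
  set c : ℕ → ℂ → ℂ := fun j z => (j.factorial : ℂ)⁻¹ * iteratedDeriv j (fun ζ => h (ζ, z)) 0 with hc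
  have hdζ : ∀ z ∈ ball (0:ℂ) ρ, DifferentiableOn ℂ (fun ζ => h (ζ, z)) (closedBall 0 ρ) := by
    intro z hz
    refine hh.comp (f := fun ζ => (ζ, z)) (by fun_prop) ?_
    intro ζ hζ
    exact hmem ζ hζ z (ball_subset_closedBall hz)
  have hdz : ∀ ζ ∈ ball (0:ℂ) ρ, DifferentiableOn ℂ (fun z => h (ζ, z)) (ball 0 ρ) := by
    intro ζ hζ
    refine hh.comp (f := fun z => (ζ, z)) (by fun_prop) ?_
    intro z hz
    exact hmem ζ (ball_subset_closedBall hζ) z (ball_subset_closedBall hz)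
  have hsum : ∀ ζ ∈ ball (0:ℂ) ρ, ∀ z ∈ ball (0:ℂ) ρ, 
      HasSum (fun j => c j z * ζ ^ j) (h (ζ, z)) := by
    intro ζ hζ z hz
    have := Complex.hasSum_taylorSeries_on_ball (f := fun ζ => h (ζ, z))
      ((hdζ z hz).mono ball_subset_closedBall) hζ
    have e : (fun j => c j z * ζ ^ j) = fun j : ℕ => (j.factorial : ℂ)⁻¹ • (ζ - 0) ^ j • 
        iteratedDeriv j (fun ζ => h (ζ, z)) 0 := by
      funext j
      simp only [sub_zero, smul_eq_mul, c]; ring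
    rw [e]; exact this
  have hcb : ∀ j, ∀ z ∈ ball (0:ℂ) ρ, ‖c j z‖ ≤ M / ρ ^ j := by
    intro j z hz
    have h1 : DiffContOnCl ℂ (fun ζ => h (ζ, z)) (ball 0 ρ) :=
      DifferentiableOn.diffContOnCl (by rw [closure_ball _ hρ0.ne']; exact hdζ z hz)
    have h2 := Complex.norm_iteratedDeriv_le_of_forall_mem_sphere_norm_le j hρ0 h1
      (C := M) (fun ζ hζ => hM ζ (sphere_subset_closedBall hζ) z (ball_subset_closedBall hz))
    simp only [hc, norm_mul, norm_inv, Complex.norm_natCast]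
    rw [inv_mul_le_iff₀ (by positivity)]
    calc _ ≤ _ := h2
      _ = _ := by ring
  have hrem : ∀ n : ℕ, ∃ C : ℝ, ∀ ζ ∈ ball (0:ℂ) (ρ/2), ∀ z ∈ ball (0:ℂ) ρ,
        ‖h (ζ, z) - ∑ j ∈ Finset.range n, c j z * ζ ^ j‖ ≤ C * ‖ζ‖ ^ n := by
    intro n
    refine ⟨2 * M / ρ ^ n, fun ζ hζ z hz => ?_⟩
    have hζ' : ‖ζ‖ < ρ / 2 := by simpa using hζ
    have hζρ : ζ ∈ ball (0:ℂ) ρ := by rw [mem_ball_zero_iff]; linarith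
    have h1 := (hasSum_nat_add_iff' n).2 (hsum ζ hζρ z hz)
    have hg : HasSum (fun j : ℕ => M / ρ ^ n * ‖ζ‖ ^ n * (1/2:ℝ) ^ j) (M / ρ ^ n * ‖ζ‖ ^ n * 2) :=
      hasSum_geometric_two.mul_left _
    have h2 := h1.norm_le_of_bounded hg (fun j => by
      rw [norm_mul, norm_pow]
      calc ‖c (j+n) z‖ * ‖ζ‖^(j+n) ≤ M / ρ^(j+n) * ‖ζ‖^(j+n) := by gcongr; exact hcb _ z hz
        _ = M / ρ ^ n * ‖ζ‖ ^ n * (‖ζ‖/ρ)^j := by rw [div_pow, pow_add, pow_add]; field_simp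
        _ ≤ M / ρ ^ n * ‖ζ‖ ^ n * (1/2)^j := by
          have : ‖ζ‖/ρ ≤ 1/2 := ?_
          · gcongr
          rw [div_le_iff₀ hρ0]; linarith)
    calc _ ≤ _ := h2
      _ = _ := by ring
  refine ⟨ρ, hρ0, by linarith, c, ?_, hsum, hrem⟩
  intro j
  induction j using Nat.strong_induction_on with
  | _ j ih =>
    set ζ : ℕ → ℂ := fun k => ((ρ / (k + 3) : ℝ) : ℂ) with hζdef
    have hζn : ∀ k, ‖ζ k‖ = ρ / (k+3) := by
      intro k; simp only [hζdef]; rw [Complex.norm_real, Real.norm_of_nonneg (by positivity)]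
    have hζb : ∀ k, ζ k ∈ ball (0:ℂ) (ρ/2) := by
      intro k
      rw [mem_ball_zero_iff, hζn]
      apply div_lt_div_of_pos_left hρ0 (by norm_num)
      have : (0:ℝ) ≤ k := by positivity
      linarith
    have hζ0 : ∀ k, ζ k ≠ 0 := by
      intro k; rw [← norm_ne_zero_iff, hζn]; positivity
    have hζb' : ∀ k, ζ k ∈ ball (0:ℂ) ρ := fun k => ball_subset_ball (by linarith) (hζb k)
    have hlim : Tendsto (fun k => ‖ζ k‖) atTop (nhds 0) := by
      simp only [hζn]
      apply Tendsto.div_atTop tendsto_const_nhds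
      exact tendsto_atTop_add_const_right _ _ tendsto_natCast_atTop_atTop
    obtain ⟨C, hC⟩ := hrem (j+1)
    have hunif : TendstoUniformlyOn 
        (fun k z => (h (ζ k, z) - ∑ i ∈ Finset.range j, c i z * ζ k ^ i) / ζ k ^ j) (c j) atTop
        (ball 0 ρ) := by
      rw [Metric.tendstoUniformlyOn_iff]
      intro ε hε
      have h1 : Tendsto (fun k => C * ‖ζ k‖) atTop (nhds 0) := by simpa using hlim.const_mul C
      filter_upwards [h1.eventually (gt_mem_nhds hε)] with k hk z hz
      refine lt_of_le_of_lt ?_ hk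
      rw [dist_eq_norm', div_sub' (pow_ne_zero j (hζ0 k)), norm_div, norm_pow, 
        div_le_iff₀ (by have := norm_pos_iff.2 (hζ0 k); positivity)]
      have := hC (ζ k) (hζb k) z hz
      rw [Finset.sum_range_succ] at this
      calc _ = ‖h (ζ k, z) - (∑ x ∈ Finset.range j, c x z * ζ k ^ x + c j z * ζ k ^ j)‖ := by
            congr 1; ring
        _ ≤ _ := this
        _ = _ := by ring
    refine hunif.tendstoLocallyUniformlyOn.differentiableOn ?_ isOpen_ball
    refine Eventually.of_forall (fun k => ?_)
    refine DifferentiableOn.div_const (DifferentiableOn.sub (hdz _ (hζb' k)) ?_) _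
    apply DifferentiableOn.fun_sum
    intro i hi
    exact (ih i (Finset.mem_range.1 hi)).mul_const _

/-- identity theorem along lines -/
lemma aux_ident (s : ℝ) (h : ℂ × ℂ → ℂ)
    (hh : DifferentiableOn ℂ h (ball (0 : ℂ × ℂ) s))
    (h0 : ∀ᶠ q in nhds (0 : ℂ × ℂ), h q = 0) : ∀ q ∈ ball (0:ℂ × ℂ) s, h q = 0 := by
  intro q hq
  set U : Set ℂ := (fun t : ℂ => t • q) ⁻¹' ball (0:ℂ × ℂ) s with hU
  have hUo : IsOpen U := isOpen_ball.preimage (by fun_prop)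
  have hUc : IsPreconnected U := by
    apply Convex.isPreconnected (s := U) 
    have : Convex ℝ (ball (0:ℂ × ℂ) s) := convex_ball _ _
    exact this.is_linear_preimage (f := fun t : ℂ => t • q) 
      ⟨fun x y => add_smul _ _ _, fun c x => by rw [Complex.real_smul, mul_smul]; rfl⟩
  have hd : DifferentiableOn ℂ (fun t : ℂ => h (t • q)) U := 
    hh.comp (f := fun t : ℂ => t • q) (by fun_prop) (fun t ht => ht)
  have ha := hd.analyticOnNhd hUo
  have hs : 0 < s := pos_of_mem_ball hq
  have ht : Tendsto (fun t : ℂ => t • q) (nhds 0) (nhds 0) := by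
    have : Continuous (fun t : ℂ => t • q) := by fun_prop
    simpa using this.tendsto 0
  have := ha.eqOn_zero_of_preconnected_of_eventuallyEq_zero hUc (z₀ := 0) (by simp [hU, hs]) 
    (ht.eventually h0) (x := 1) (by simpa [hU] using hq)
  simpa using this

/-- Simultaneous normal form -/
lemma aux_normal (s : ℝ) (hs : 0 < s) (h₁ h₂ : ℂ × ℂ → ℂ)
    (hh₁ : DifferentiableOn ℂ h₁ (ball (0 : ℂ × ℂ) s))
    (hh₂ : DifferentiableOn ℂ h₂ (ball (0 : ℂ × ℂ) s))
    (hne : ∃ z ∈ ball (0 : ℂ × ℂ) s, h₁ z ≠ 0 ∨ h₂ z ≠ 0) :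
    ∃ (m : ℕ) (A B k : ℂ → ℂ), AnalyticAt ℂ A 0 ∧ AnalyticAt ℂ B 0 ∧ AnalyticAt ℂ k 0 ∧
      ((¬ ∀ᶠ z in nhds 0, A z = 0) ∨ (¬ ∀ᶠ z in nhds 0, B z = 0)) ∧
      (∃ C : ℝ, ∀ᶠ q : ℂ × ℂ in nhds 0, 
        ‖h₁ q - q.1^m * (A q.2 + k q.2 * q.1)‖ ≤ C * ‖q.1‖^(m+2)) ∧
      (∃ C : ℝ, ∀ᶠ q : ℂ × ℂ in nhds 0, ‖h₂ q - q.1^m * B q.2‖ ≤ C * ‖q.1‖^(m+1)) ∧ 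
      (m = 0 → ∀ᶠ z in nhds 0, A z = h₁ (0, z) ∧ B z = h₂ (0, z)) := by
  obtain ⟨ρ₁, hρ₁, -, c, hc, hcs, hcr⟩ := aux_taylor s hs h₁ hh₁
  obtain ⟨ρ₂, hρ₂, -, d, hd, hds, hdr⟩ := aux_taylor s hs h₂ hh₂
  have hcan : ∀ j, AnalyticAt ℂ (c j) 0 := fun j => 
    (hc j).analyticAt (ball_mem_nhds _ hρ₁)
  have hdan : ∀ j, AnalyticAt ℂ (d j) 0 := fun j => 
    (hd j).analyticAt (ball_mem_nhds _ hρ₂)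
  have hev : ∀ ρ : ℝ, 0 < ρ → ∀ᶠ q : ℂ × ℂ in nhds 0, 
      q.1 ∈ ball (0:ℂ) (ρ/2) ∧ q.2 ∈ ball (0:ℂ) ρ := by
    intro ρ hρ
    have h1 : ∀ᶠ q : ℂ × ℂ in nhds 0, q.1 ∈ ball (0:ℂ) (ρ/2) := 
      continuous_fst.continuousAt.eventually (ball_mem_nhds _ (by positivity))
    have h2 : ∀ᶠ q : ℂ × ℂ in nhds 0, q.2 ∈ ball (0:ℂ) ρ := 
      continuous_snd.continuousAt.eventually (ball_mem_nhds _ (by positivity))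
    exact h1.and h2
  have hex : ∃ m, (¬ ∀ᶠ z in nhds 0, c m z = 0) ∨ (¬ ∀ᶠ z in nhds 0, d m z = 0) := by
    by_contra hcon
    push Not at hcon
    have key : ∀ (ρ : ℝ) (hρ : 0 < ρ) (h : ℂ × ℂ → ℂ) (c : ℕ → ℂ → ℂ) 
        (hh : DifferentiableOn ℂ h (ball (0 : ℂ × ℂ) s))
        (hc : ∀ j, DifferentiableOn ℂ (c j) (ball 0 ρ))
        (hcs : ∀ ζ ∈ ball (0:ℂ) ρ, ∀ z ∈ ball (0:ℂ) ρ, HasSum (fun j => c j z * ζ ^ j) (h (ζ, z)))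
        (h0 : ∀ m, ∀ᶠ z in nhds 0, c m z = 0), ∀ q ∈ ball (0:ℂ × ℂ) s, h q = 0 := by
      intro ρ hρ h c hh hc hcs h0
      apply aux_ident s h hh
      filter_upwards [hev ρ hρ] with q hq
      have hz : ∀ m, c m q.2 = 0 := fun m =>
        ((hc m).analyticOnNhd isOpen_ball).eqOn_zero_of_preconnected_of_eventuallyEq_zero
          (convex_ball _ _).isPreconnected (z₀ := 0) (mem_ball_self hρ) (h0 m) hq.2
      have := hcs q.1 (ball_subset_ball (by linarith) hq.1) q.2 hq.2
      simp only [hz, zero_mul] at this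
      exact this.unique hasSum_zero
    obtain ⟨q, hq, hq'⟩ := hne
    rcases hq' with hq' | hq'
    · exact hq' (key ρ₁ hρ₁ h₁ c hh₁ hc hcs (fun m => (hcon m).1) q hq)
    · exact hq' (key ρ₂ hρ₂ h₂ d hh₂ hd hds (fun m => (hcon m).2) q hq)
  classical
  obtain ⟨m, hm, hmin⟩ : ∃ m, ((¬ ∀ᶠ z in nhds 0, c m z = 0) ∨ (¬ ∀ᶠ z in nhds 0, d m z = 0)) ∧ 
      ∀ j < m, (∀ᶠ z in nhds 0, c j z = 0) ∧ (∀ᶠ z in nhds 0, d j z = 0) := by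
    refine ⟨Nat.find hex, Nat.find_spec hex, fun j hj => ?_⟩
    have := Nat.find_min hex hj
    push Not at this
    exact this
  have hsum0 : ∀ (c : ℕ → ℂ → ℂ), (∀ j < m, ∀ᶠ z in nhds (0:ℂ), c j z = 0) → 
      ∀ᶠ q : ℂ × ℂ in nhds 0, ∑ j ∈ Finset.range m, c j q.2 * q.1 ^ j = 0 := by
    intro c hc
    have h1 : ∀ᶠ z in nhds (0:ℂ), ∀ j ∈ Finset.range m, c j z = 0 := by
      rw [Filter.eventually_all_finset]
      exact fun j hj => hc j (Finset.mem_range.1 hj)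
    have h2 : Tendsto (fun q : ℂ × ℂ => q.2) (nhds 0) (nhds 0) := continuous_snd.tendsto 0
    filter_upwards [h2.eventually h1] with q hq
    exact Finset.sum_eq_zero (fun j hj => by rw [hq j hj, zero_mul])
  refine ⟨m, c m, d m, c (m+1), hcan m, hdan m, hcan _, hm, ?_, ?_, ?_⟩
  · obtain ⟨C, hC⟩ := hcr (m+2)
    refine ⟨C, ?_⟩
    filter_upwards [hev ρ₁ hρ₁, hsum0 c (fun j hj => (hmin j hj).1)] with q hq hq0
    have := hC q.1 hq.1 q.2 hq.2
    rw [Finset.sum_range_succ, Finset.sum_range_succ, hq0] at this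
    convert this using 3
    ring
  · obtain ⟨C, hC⟩ := hdr (m+1)
    refine ⟨C, ?_⟩
    filter_upwards [hev ρ₂ hρ₂, hsum0 d (fun j hj => (hmin j hj).2)] with q hq hq0
    have := hC q.1 hq.1 q.2 hq.2
    rw [Finset.sum_range_succ, hq0] at this
    convert this using 3
    ring
  · rintro rfl
    have key : ∀ (ρ : ℝ) (hρ : 0 < ρ) (h : ℂ × ℂ → ℂ) (c : ℕ → ℂ → ℂ) 
        (hcs : ∀ ζ ∈ ball (0:ℂ) ρ, ∀ z ∈ ball (0:ℂ) ρ, HasSum (fun j => c j z * ζ ^ j) (h (ζ, z))),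
        ∀ᶠ z in nhds 0, c 0 z = h (0, z) := by
      intro ρ hρ h c hcs
      filter_upwards [ball_mem_nhds _ hρ] with z hz
      have h1 := hcs 0 (mem_ball_self hρ) z hz
      have h2 : HasSum (fun j => c j z * 0 ^ j) (c 0 z * 0 ^ 0) := 
        hasSum_single 0 (fun j hj => by simp [hj])
      simpa using h2.unique h1
    exact (key ρ₁ hρ₁ h₁ c hcs).and (key ρ₂ hρ₂ h₂ d hds)


lemma aux_wDeriv_re (u : ℂ → ℝ) (z h : ℂ) : (h * wDeriv u z).re = fderiv ℝ u z h / 2 := by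
  have : h = (h.re : ℝ) • (1:ℂ) + (h.im : ℝ) • I := by simp
  have h2 : fderiv ℝ u z h = h.re * fderiv ℝ u z 1 + h.im * fderiv ℝ u z I := by
    conv_lhs => rw [this]
    rw [map_add, map_smul, map_smul]; simp
  rw [h2, wDeriv]
  generalize fderiv ℝ u z 1 = x
  generalize fderiv ℝ u z I = y
  have : ((x:ℂ) - I * y) / 2 = ((x/2 : ℝ):ℂ) - I * ((y/2:ℝ):ℂ) := by push_cast; ring
  rw [this]; simp; ring

lemma aux_wDeriv_norm (u : ℂ → ℝ) (z : ℂ) : ‖wDeriv u z‖ ≤ ‖fderiv ℝ u z‖ := by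
  rw [wDeriv, norm_div]
  have h1 : ‖fderiv ℝ u z 1‖ ≤ ‖fderiv ℝ u z‖ := by simpa using (fderiv ℝ u z).le_opNorm 1
  have h2 : ‖fderiv ℝ u z I‖ ≤ ‖fderiv ℝ u z‖ := by simpa using (fderiv ℝ u z).le_opNorm I
  have h3 := norm_sub_le ((fderiv ℝ u z 1 : ℝ):ℂ) (I * (fderiv ℝ u z I : ℝ))
  simp only [norm_mul, Complex.norm_I, Complex.norm_real, one_mul] at h3
  have : ‖(2:ℂ)‖ = 2 := by simp
  rw [this, div_le_iff₀ (by norm_num)]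
  linarith

lemma aux_glaeser (P : ℂ → ℝ) (hP : ContDiffAt ℝ 2 P 0) (hP0 : P 0 = 0)
    (hpos : ∀ᶠ z in nhds (0:ℂ), z ≠ 0 → 0 < P z) :
    ∃ C : ℝ, ∀ᶠ z in nhdsWithin (0:ℂ) {0}ᶜ, ‖fderiv ℝ P z‖ ≤ C * √(P z) := by
  have h1 : ContDiffAt ℝ 1 (fderiv ℝ P) 0 := hP.fderiv_right (by norm_num)
  obtain ⟨K, t, ht, hK⟩ := h1.exists_lipschitzOnWith
  have hd : ∀ᶠ z in nhds (0:ℂ), DifferentiableAt ℝ P z := by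
    filter_upwards [hP.eventually (by simp)] with z hz using hz.differentiableAt (by simp)
  obtain ⟨δ, hδ, hδb⟩ := Metric.eventually_nhds_iff_ball.1 (hd.and (hpos.and ht))
  have hcont : ContinuousAt (fun z => √(P z)) 0 := hP.continuousAt.sqrt
  have hsm : ∀ᶠ z in nhds (0:ℂ), √(P z) < δ/2 := 
    hcont.eventually (gt_mem_nhds (by simp [hP0]; positivity))
  refine ⟨1 + K, ?_⟩
  filter_upwards [self_mem_nhdsWithin, nhdsWithin_le_nhds hsm, 
    nhdsWithin_le_nhds (ball_mem_nhds (0:ℂ) (half_pos hδ))] with z hz0 hzs hzb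
  have hz0 : z ≠ 0 := hz0
  have hzb' : ‖z‖ < δ/2 := by simpa using hzb
  have hzδ : z ∈ ball (0:ℂ) δ := by rw [mem_ball_zero_iff]; linarith
  have hPz := (hδb z hzδ).2.1 hz0
  set S := √(P z) with hS
  have hS0 : 0 < S := Real.sqrt_pos.2 hPz
  have hSS : S * S = P z := Real.mul_self_sqrt hPz.le
  have key : ∀ v : ℂ, ‖v‖ = 1 → fderiv ℝ P z v ≤ (1 + K) * S := by
    intro v hv
    set h : ℂ := -((S:ℝ) • v) with hh
    have hhn : ‖h‖ = S := by rw [hh, norm_neg, norm_smul, hv]; simp [abs_of_pos hS0]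
    have hcv : Convex ℝ (ball (0:ℂ) δ ∩ closedBall z S) := 
      (convex_ball _ _).inter (convex_closedBall _ _)
    have hzh : z + h ∈ ball (0:ℂ) δ := by
      rw [mem_ball_zero_iff]
      linarith [norm_add_le z h]
    have h3 := hcv.norm_image_sub_le_of_norm_fderiv_le' (𝕜 := ℝ) (f := P) (φ := fderiv ℝ P z) (C := K * S)
      (x := z) (y := z + h)
      (fun x hx => (hδb x hx.1).1) (fun x hx => by
        have := hK.dist_le_mul x (hδb x hx.1).2.2 z (hδb z hzδ).2.2
        rw [dist_eq_norm, dist_eq_norm] at this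
        have h4 : ‖x - z‖ ≤ S := by simpa [dist_eq_norm] using hx.2
        calc _ ≤ _ := this
          _ ≤ _ := by gcongr) ⟨hzδ, by simp [hS0.le]⟩ ⟨hzh, by simp [hhn]⟩
    have h5 : 0 ≤ P (z + h) := by
      by_cases h0 : z + h = 0
      · rw [h0, hP0]
      · exact ((hδb _ hzh).2.1 h0).le
    rw [add_sub_cancel_left, hhn] at h3
    have h6 := (Real.norm_eq_abs _ ▸ h3)
    have h7 := (abs_le.1 h6).2
    have h8 : fderiv ℝ P z h = - (S * fderiv ℝ P z v) := by
      rw [hh, map_neg, map_smul, smul_eq_mul]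
    rw [h8] at h7
    have h9 : S * fderiv ℝ P z v ≤ S * ((1 + K) * S) := by nlinarith
    exact le_of_mul_le_mul_left h9 hS0
  apply ContinuousLinearMap.opNorm_le_bound _ (by positivity)
  intro v
  by_cases hv : v = 0
  · simp [hv]
  have hvn : 0 < ‖v‖ := norm_pos_iff.2 hv
  have e : v = ‖v‖ • ((‖v‖⁻¹ : ℝ) • v) := by rw [smul_smul, mul_inv_cancel₀ hvn.ne', one_smul]
  have en : ‖((‖v‖⁻¹ : ℝ) • v)‖ = 1 := by rw [norm_smul, norm_inv, norm_norm]; field_simp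
  set v' := ((‖v‖⁻¹ : ℝ) • v) with hv'
  have k1 := key v' en
  have k2 := key (-v') (by rw [norm_neg]; exact en)
  rw [map_neg] at k2
  have : ‖fderiv ℝ P z v'‖ ≤ (1+K) * S := by rw [Real.norm_eq_abs, abs_le]; constructor <;> linarith
  conv_lhs => rw [e]
  rw [map_smul, norm_smul, norm_norm, mul_comm]
  gcongr

lemma aux_f (r : ℝ) (hr : 0 < r) (f : ℂ → ℝ → ℝ)
    (hfan : AnalyticOnNhd ℝ (fun q : ℂ × ℝ => f q.1 q.2) (ball (0:ℂ) r ×ˢ Set.Ioo (-r) r))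
    (hf0 : ∀ z ∈ ball (0:ℂ) r, f z 0 = 0) :
    ∃ (a : ℂ → ℝ) (K : ℝ), ContinuousAt a 0 ∧ ∀ᶠ q : ℂ × ℝ in nhds 0,
      |f q.1 q.2 - a q.1 * q.2| ≤ K * q.2 ^ 2 ∧ 
      (∃ d, HasDerivAt (f q.1) d q.2 ∧ |d - a q.1| ≤ K * |q.2|) ∧
      DifferentiableAt ℝ (fun w => f w q.2) q.1 ∧ ‖fderiv ℝ (fun w => f w q.2) q.1‖ ≤ K * |q.2| := by
  set Φ : ℂ × ℝ → ℝ := fun q => f q.1 q.2 with hΦ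
  have han : AnalyticAt ℝ Φ 0 := hfan 0 (by simp [hr])
  have hcd : ContDiffAt ℝ 2 Φ 0 := han.contDiffAt
  have h1 : ContDiffAt ℝ 1 (fderiv ℝ Φ) 0 := hcd.fderiv_right (by norm_num)
  obtain ⟨K, t, ht, hK⟩ := h1.exists_lipschitzOnWith
  have hd : ∀ᶠ q in nhds (0:ℂ × ℝ), DifferentiableAt ℝ Φ q := by
    filter_upwards [hcd.eventually (by simp)] with z hz using hz.differentiableAt (by simp)
  have hb : ∀ᶠ q in nhds (0:ℂ × ℝ), q.1 ∈ ball (0:ℂ) r := 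
    continuous_fst.continuousAt.eventually (ball_mem_nhds _ hr)
  obtain ⟨δ, hδ, hδb⟩ := Metric.eventually_nhds_iff_ball.1 (hd.and (hb.and ht))
  have hdt : ∀ q : ℂ × ℝ, DifferentiableAt ℝ Φ q → HasDerivAt (f q.1) (fderiv ℝ Φ q (0, 1)) q.2 := by
    intro q hq
    have h3 : HasDerivAt (fun t : ℝ => (q.1, t)) ((0:ℂ), (1:ℝ)) q.2 := 
      (hasDerivAt_const q.2 q.1).prodMk (hasDerivAt_id q.2)
    exact (hq.hasFDerivAt (x := q)).comp_hasDerivAt q.2 h3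
  have hdz : ∀ q : ℂ × ℝ, DifferentiableAt ℝ Φ q → HasFDerivAt (fun w => f w q.2) 
      ((fderiv ℝ Φ q).comp (ContinuousLinearMap.inl ℝ ℂ ℝ)) q.1 := by
    intro q hq
    have h3 : HasFDerivAt (fun w : ℂ => (w, q.2)) (ContinuousLinearMap.inl ℝ ℂ ℝ) q.1 := 
      hasFDerivAt_prodMk_left q.1 q.2
    exact (hq.hasFDerivAt (x := q)).comp q.1 h3
  set a : ℂ → ℝ := fun z => fderiv ℝ Φ (z, 0) (0, 1) with ha
  have hnq : ∀ q : ℂ × ℝ, q ∈ ball (0:ℂ × ℝ) δ → ‖q.1‖ < δ ∧ |q.2| < δ := by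
    intro q hq
    rw [mem_ball_zero_iff, Prod.norm_def] at hq
    simpa [sup_lt_iff] using hq
  have hmq : ∀ z : ℂ, ∀ t : ℝ, ‖z‖ < δ → |t| < δ → (z, t) ∈ ball (0:ℂ × ℝ) δ := by
    intro z t h1 h2
    rw [mem_ball_zero_iff, Prod.norm_def]
    simpa [sup_lt_iff] using ⟨h1, h2⟩
  have hlip : ∀ q ∈ ball (0:ℂ × ℝ) δ, ‖fderiv ℝ Φ q - fderiv ℝ Φ (q.1, 0)‖ ≤ K * |q.2| := by
    intro q hq
    have hq0 := hmq q.1 0 (hnq q hq).1 (by simpa using hδ)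
    have := hK.dist_le_mul q (hδb q hq).2.2 _ (hδb _ hq0).2.2
    have hn : ‖q - (q.1, (0:ℝ))‖ = |q.2| := by rw [Prod.norm_def]; simp
    rw [dist_eq_norm, dist_eq_norm, hn] at this
    exact this
  have htb : ∀ q ∈ ball (0:ℂ × ℝ) δ, |fderiv ℝ Φ q (0,1) - a q.1| ≤ K * |q.2| := by
    intro q hq
    have h3 := (fderiv ℝ Φ q - fderiv ℝ Φ (q.1, 0)).le_opNorm ((0:ℂ),(1:ℝ))
    have h4 : ‖((0:ℂ),(1:ℝ))‖ = 1 := by simp [Prod.norm_def]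
    rw [h4, mul_one] at h3
    exact h3.trans (hlip q hq)
  refine ⟨a, K, ?_, ?_⟩
  · have c1 : ContinuousAt (fun z : ℂ => fderiv ℝ Φ (z, 0)) 0 := by
      refine ContinuousAt.comp (g := fderiv ℝ Φ) (f := fun z : ℂ => (z, (0:ℝ))) ?_ (by fun_prop)
      exact h1.continuousAt
    exact c1.clm_apply continuousAt_const
  · filter_upwards [ball_mem_nhds (0:ℂ × ℝ) hδ] with q hq
    obtain ⟨hq1, hq2⟩ := hnq q hq
    have hz0 : fderiv ℝ (fun w => f w 0) q.1 = 0 := by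
      have : (fun w => f w 0) =ᶠ[nhds q.1] fun _ => 0 := by
        filter_upwards [isOpen_ball.mem_nhds (hδb q hq).2.1] with w hw using hf0 w hw
      rw [this.fderiv_eq]; simp
    refine ⟨?_, ⟨_, hdt q (hδb q hq).1, htb q hq⟩, (hdz q (hδb q hq).1).differentiableAt, ?_⟩
    · have hcv : Convex ℝ (Set.uIcc 0 q.2) := convex_uIcc _ _
      have h5 := hcv.norm_image_sub_le_of_norm_hasDerivWithin_le 
        (f := fun t => f q.1 t - a q.1 * t) (f' := fun t => fderiv ℝ Φ (q.1, t) (0,1) - a q.1) 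
        (C := K * |q.2|) (x := 0) (y := q.2) (fun t ht => by
          have ht' : |t| ≤ |q.2| := by simpa using Set.abs_sub_left_of_mem_uIcc ht
          have h6 := hdt (q.1, t) (hδb _ (hmq q.1 t hq1 (ht'.trans_lt hq2))).1
          have h7 := (h6.sub ((hasDerivAt_id t).const_mul (a q.1))).hasDerivWithinAt (s := Set.uIcc 0 q.2)
          simpa using! h7) (fun t ht => by
          have ht' : |t| ≤ |q.2| := by simpa using Set.abs_sub_left_of_mem_uIcc ht
          have := htb _ (hmq q.1 t hq1 (ht'.trans_lt hq2))
          rw [Real.norm_eq_abs]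
          refine this.trans ?_
          simp only
          gcongr) Set.left_mem_uIcc Set.right_mem_uIcc
      simp only [hf0 q.1 (hδb q hq).2.1, mul_zero, sub_zero, Real.norm_eq_abs] at h5
      calc _ ≤ _ := h5
        _ = K * |q.2|^2 := by ring
        _ = _ := by rw [sq_abs]
    · have hq0 := hmq q.1 0 hq1 (by simpa using hδ)
      have e1 := (hdz q (hδb q hq).1).fderiv
      have e2 := (hdz _ (hδb _ hq0).1).fderiv
      simp only [hz0] at e2
      rw [e1]
      have e3 : (fderiv ℝ Φ q).comp (ContinuousLinearMap.inl ℝ ℂ ℝ) = 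
        (fderiv ℝ Φ q - fderiv ℝ Φ (q.1, 0)).comp (ContinuousLinearMap.inl ℝ ℂ ℝ) := by
        rw [ContinuousLinearMap.sub_comp, ← e2, sub_zero]
      rw [e3]
      calc _ ≤ _ := ContinuousLinearMap.opNorm_comp_le _ _
        _ ≤ (K * |q.2|) * 1 := by
          gcongr
          · exact hlip q hq
          · exact ContinuousLinearMap.norm_inl_le_one _ _ _
        _ = _ := by ring


lemma aux_eq (r s : ℝ) (hr : 0 < r) (hs : 0 < s)
    (P : ℂ → ℝ) (f : ℂ → ℝ → ℝ)
    (hPsm : ContDiffOn ℝ (⊤ : ℕ∞) P (ball (0:ℂ) r))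
    (hP0 : P 0 = 0)
    (hfan : AnalyticOnNhd ℝ (fun q : ℂ × ℝ => f q.1 q.2) (ball (0:ℂ) r ×ˢ Set.Ioo (-r) r))
    (hf0 : ∀ z ∈ ball (0:ℂ) r, f z 0 = 0)
    (h₁ h₂ : ℂ × ℂ → ℂ)
    (htang : ∀ z : ℂ × ℂ, z ∈ ball (0 : ℂ × ℂ) s → z.1 ∈ ball (0:ℂ) r → z.2 ∈ ball (0:ℂ) r →
      z.1.re + P z.2 + f z.2 z.1.im = 0 →
      (h₁ z * wDeriv (fun w => w.re + P z.2 + f z.2 w.im) z.1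
        + h₂ z * wDeriv (fun w => z.1.re + P w + f w z.1.im) z.2).re = 0) :
    ∃ a : ℂ → ℝ, ContinuousAt a 0 ∧ ∀ τ : ℝ, ∃ ζ e φ : ℂ → ℂ,
      e =O[nhds 0] P ∧ φ =O[nhds 0] P ∧
      (fun z => ζ z - P z * (I * (1 + I * a z) * τ - 1)) =O[nhds 0] (fun z => P z ^ 2) ∧
      ∀ᶠ z in nhds 0,
        (h₁ (ζ z, z) * (1 - I * a z + e z) + 2 * h₂ (ζ z, z) * (wDeriv P z + φ z)).re = 0 := by
  obtain ⟨a, K, ha, hK⟩ := aux_f r hr f hfan hf0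
  refine ⟨a, ha, fun τ => ?_⟩
  have hPc : ContinuousAt P 0 := 
    (hPsm.contDiffAt (ball_mem_nhds _ hr)).continuousAt
  have hPd : ∀ z ∈ ball (0:ℂ) r, DifferentiableAt ℝ P z := fun z hz =>
    (hPsm.contDiffAt (isOpen_ball.mem_nhds hz)).differentiableAt (by simp)
  have hc : ContinuousAt (fun z : ℂ => (z, τ * P z)) 0 := by fun_prop
  have hc0 : (fun z : ℂ => (z, τ * P z)) 0 = (0 : ℂ × ℝ) := by simp [hP0]
  have hct : Tendsto (fun z : ℂ => (z, τ * P z)) (nhds 0) (nhds (0 : ℂ × ℝ)) := by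
    have := hc.tendsto
    rwa [show ((0:ℂ), τ * P 0) = (0 : ℂ × ℝ) from hc0] at this
  have hK' := hct.eventually hK
  set ζ : ℂ → ℂ := fun z => I * ((τ * P z : ℝ):ℂ) - P z - f z (τ * P z) with hζ
  have hfc : ContinuousAt (fun z : ℂ => f z (τ * P z)) 0 := by
    have h1 : ContinuousAt (fun q : ℂ × ℝ => f q.1 q.2) ((fun z : ℂ => (z, τ * P z)) 0) := by
      rw [hc0]; exact (hfan 0 (by simp [hr])).continuousAt
    exact ContinuousAt.comp (f := fun z : ℂ => (z, τ * P z)) h1 hc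
  have hζc : ContinuousAt ζ 0 := by
    have q1 : ContinuousAt (fun z => ((P z : ℝ):ℂ)) 0 := continuous_ofReal.continuousAt.comp hPc
    have q2 : ContinuousAt (fun z => ((f z (τ * P z) : ℝ):ℂ)) 0 := 
      continuous_ofReal.continuousAt.comp hfc
    have q3 : ζ = fun z => I * (τ * ((P z : ℝ):ℂ)) - ((P z : ℝ):ℂ) - ((f z (τ * P z) : ℝ):ℂ) := by
      funext z; simp only [hζ]; push_cast; rfl
    rw [q3]; fun_prop
  have hζ0 : ζ 0 = 0 := by simp [hζ, hP0, hf0 0 (by simp [hr])]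
  have hb1 : ∀ᶠ z in nhds (0:ℂ), ζ z ∈ ball (0:ℂ) r := 
    hζc.eventually (by rw [hζ0]; exact ball_mem_nhds _ hr)
  have hb2 : ∀ᶠ z in nhds (0:ℂ), (ζ z, z) ∈ ball (0:ℂ × ℂ) s := by
    have : ContinuousAt (fun z => (ζ z, z)) 0 := hζc.prodMk continuousAt_id
    exact this.eventually (by 
      simp only [hζ0]; exact ball_mem_nhds _ hs)
  refine ⟨ζ, fun z => - I * (deriv (f z) (τ * P z) - a z : ℝ), 
    fun z => wDeriv (fun w => f w (τ * P z)) z, ?_, ?_, ?_, ?_⟩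
  · apply Asymptotics.IsBigO.of_bound (K * |τ|)
    filter_upwards [hK'] with z ⟨_, ⟨d, hd, hd2⟩, _, _⟩
    rw [hd.deriv, norm_mul, Complex.norm_real]
    simpa [abs_mul, mul_assoc] using hd2
  · apply Asymptotics.IsBigO.of_bound (K * |τ|)
    filter_upwards [hK'] with z ⟨_, _, _, h⟩
    refine (aux_wDeriv_norm _ _).trans (h.trans ?_)
    simp [abs_mul, mul_assoc]
  · apply Asymptotics.IsBigO.of_bound (K * τ^2)
    filter_upwards [hK'] with z ⟨h, _⟩
    have e1 : ζ z - P z * (I * (1 + I * a z) * τ - 1) = 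
      -((f z (τ * P z) - a z * (τ * P z) : ℝ) : ℂ) := by
      simp only [hζ]; push_cast; linear_combination (-(P z:ℂ) * a z * τ) * I_sq
    rw [e1, norm_neg, Complex.norm_real, Real.norm_eq_abs]
    refine h.trans (le_of_eq ?_)
    simp; ring
  · filter_upwards [hK', hb1, hb2, ball_mem_nhds (0:ℂ) hr] with z ⟨_, ⟨d, hd, hd2⟩, hdd, _⟩ hz1 hz2 hz3
    have him : (ζ z).im = τ * P z := by simp [hζ]
    have hre : (ζ z).re = - P z - f z (τ * P z) := by simp [hζ]
    have H := htang (ζ z, z) hz2 hz1 hz3 (by simp only [him, hre]; ring)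
    simp only [him] at H
    have w1 : wDeriv (fun w => w.re + P z + f z w.im) (ζ z) = (1 - I * d) / 2 := by
      have hd' : HasDerivAt (f z) d (imCLM (ζ z)) := by rw [imCLM_apply, him]; exact hd
      have g1 : HasFDerivAt (fun w : ℂ => w.re + P z + f z w.im) (reCLM + d • imCLM) (ζ z) := 
        ((reCLM.hasFDerivAt (x := ζ z)).add_const (P z)).add 
          (hd'.comp_hasFDerivAt (ζ z) imCLM.hasFDerivAt)
      rw [wDeriv, g1.fderiv]
      simp
    have w2 : wDeriv (fun w => (ζ z).re + P w + f w (τ * P z)) z = 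
        wDeriv P z + wDeriv (fun w => f w (τ * P z)) z := by
      have g1 : HasFDerivAt (fun w => (ζ z).re + P w + f w (τ * P z)) 
        (fderiv ℝ P z + fderiv ℝ (fun w => f w (τ * P z)) z) z := 
        ((hPd z hz3).hasFDerivAt.const_add _).add hdd.hasFDerivAt
      simp only [wDeriv]
      rw [g1.fderiv]
      simp only [ContinuousLinearMap.add_apply]; push_cast; ring
    rw [w1, w2] at H
    rw [hd.deriv]
    have e2 : h₁ (ζ z, z) * (1 - I * a z + - I * (d - a z : ℝ)) + 
      2 * h₂ (ζ z, z) * (wDeriv P z + wDeriv (fun w => f w (τ * P z)) z) = 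
      ((2:ℝ):ℂ) * (h₁ (ζ z, z) * ((1 - I * d) / 2) + h₂ (ζ z, z) * 
        (wDeriv P z + wDeriv (fun w => f w (τ * P z)) z)) := by
      push_cast; ring
    rw [e2, re_ofReal_mul, H, mul_zero]


lemma aux_pow_sub {ι : Type*} {l : Filter ι} {p y w : ι → ℂ} 
    (hw : w =O[l] (fun _ => (1:ℝ))) (hy : y =O[l] (fun _ => (1:ℝ))) (hyw : (fun z => y z - w z) =O[l] p) (j : ℕ) :
    (fun z => y z ^ j - w z ^ j) =O[l] p := by
  induction j with
  | zero => simpa using Asymptotics.isBigO_zero _ _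
  | succ j ih =>
    have h1 : (fun z => y z ^ j) =O[l] (fun _ => (1:ℝ)) := by simpa using hy.pow j
    have h2 := (h1.mul hyw.norm_right)
    have h3 := (ih.norm_right.mul hw)
    simp only [one_mul, mul_one] at h2 h3
    have h4 := (h2.add h3).of_norm_right
    refine h4.congr_left (fun z => by ring)

lemma aux_lemX {ι : Type*} {l : Filter ι} {p ζ w G D : ι → ℂ} (m : ℕ)
    (hp : ∀ᶠ z in l, p z ≠ 0) (hp1 : p =O[l] (fun _ => (1:ℝ)))
    (hw : w =O[l] (fun _ => (1:ℝ))) (hD : D =O[l] (fun _ => (1:ℝ)))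
    (hζ : (fun z => ζ z - p z * w z) =O[l] (fun z => p z ^ 2))
    (hG : (fun z => G z - ζ z ^ m * D z) =O[l] (fun z => ζ z ^ (m+1))) :
    (fun z => G z / p z ^ m - w z ^ m * D z) =O[l] p := by
  have hpp : (fun z => p z ^ 2) =O[l] p := by
    have h2 := (Asymptotics.isBigO_refl p l).norm_right.mul hp1
    simp only [mul_one] at h2
    exact h2.of_norm_right.congr_left (fun z => by ring)
  have hζp : ζ =O[l] p := by
    have h1 : (fun z => p z * w z) =O[l] p := by
      have := ((Asymptotics.isBigO_refl p l).norm_right.mul hw)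
      simp only [mul_one] at this
      exact this.of_norm_right
    exact ((hζ.trans hpp).add h1).congr_left (fun z => by ring)
  have hinv : ∀ (u v : ι → ℂ) (j : ℕ), u =O[l] (fun z => p z ^ j * v z) → 
      (fun z => u z / p z ^ j) =O[l] v := by
    intro u v j h
    obtain ⟨C, hC⟩ := h.bound
    apply Asymptotics.IsBigO.of_bound C
    filter_upwards [hC, hp] with z hz hpz
    rw [norm_div, div_le_iff₀ (norm_pos_iff.2 (pow_ne_zero _ hpz))]
    refine hz.trans (le_of_eq ?_)
    rw [norm_mul]; ring
  have hy1 : (fun z => ζ z / p z) =O[l] (fun _ => (1:ℂ)) := by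
    have := hinv ζ (fun _ => 1) 1 (by simpa using hζp)
    simpa using this
  have hyw : (fun z => ζ z / p z - w z) =O[l] p := by
    have := hinv (fun z => ζ z - p z * w z) p 1 (by simpa [sq] using hζ)
    refine this.congr' ?_ (EventuallyEq.refl _ _)
    filter_upwards [hp] with z hz
    field_simp
  have hy1' : (fun z => ζ z / p z) =O[l] (fun _ => (1:ℝ)) := hy1.trans (Asymptotics.isBigO_const_const _ one_ne_zero _)
  have h1 := aux_pow_sub hw hy1' hyw m
  have h2 : (fun z => (ζ z / p z) ^ m * D z - w z ^ m * D z) =O[l] p := by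
    have := h1.norm_right.mul hD
    simp only [mul_one] at this
    exact this.of_norm_right.congr_left (fun z => by ring)
  have h3 := hinv _ p m ((hG.trans (hζp.pow (m+1))).trans (by
    simp only [pow_succ]; exact Asymptotics.isBigO_refl _ _))
  refine (h3.add h2).congr' ?_ (EventuallyEq.refl _ _)
  filter_upwards [hp] with z hz
  rw [div_pow]
  field_simp
  ring

/-- bounded product helper -/
lemma aux_bmul {ι : Type*} {l : Filter ι} {u v : ι → ℂ} {g : ι → ℝ}
    (hu : u =O[l] (fun _ => (1:ℝ))) (hv : v =O[l] g) : (fun z => u z * v z) =O[l] g := by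
  simpa using hu.mul hv

lemma aux_re_of {ι : Type*} {l : Filter ι} {T R : ι → ℂ} {g : ι → ℝ}
    (hR : R =O[l] g) (h : ∀ᶠ z in l, (T z + R z).re = 0) : (fun z => (T z).re) =O[l] g := by
  refine Asymptotics.IsBigO.trans ?_ hR
  apply Asymptotics.IsBigO.of_bound 1
  filter_upwards [h] with z hz
  rw [add_re] at hz
  rw [show (T z).re = -(R z).re by linarith, norm_neg, one_mul]
  exact abs_re_le_norm _

lemma aux_alpha {ι : Type*} {l : Filter ι} {P : ι → ℝ} {w G1 G2 A B c e φ Q : ι → ℂ} {g : ι → ℝ} (m : ℕ)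
    (hp : ∀ᶠ z in l, P z ≠ 0) 
    (hw : w =O[l] (fun _ => (1:ℝ))) (hA : A =O[l] (fun _ => (1:ℝ))) (hB : B =O[l] (fun _ => (1:ℝ)))
    (hc : c =O[l] (fun _ => (1:ℝ))) (hg : g =O[l] (fun _ => (1:ℝ)))
    (he : e =O[l] P) (hφ : φ =O[l] P) (hP : P =O[l] g) (hQ : Q =O[l] g)
    (hX1 : (fun z => G1 z / (P z : ℂ) ^ m - w z ^ m * A z) =O[l] P)
    (hX2 : (fun z => G2 z / (P z : ℂ) ^ m - w z ^ m * B z) =O[l] P)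
    (hE : ∀ᶠ z in l, (G1 z * (c z + e z) + 2 * G2 z * (Q z + φ z)).re = 0) :
    (fun z => (w z ^ m * A z * c z).re) =O[l] g := by
  have hwm : (fun z => w z ^ m) =O[l] (fun _ => (1:ℝ)) := by simpa using hw.pow m
  have hY2 : (fun z => G2 z / (P z : ℂ) ^ m) =O[l] (fun _ => (1:ℝ)) := 
    ((hX2.trans (hP.trans hg)).add (aux_bmul hwm hB)).congr_left (fun z => by ring)
  have hce : (fun z => c z + e z) =O[l] (fun _ => (1:ℝ)) := hc.add (he.trans (hP.trans hg))
  have r1 := aux_bmul hce (hX1.trans hP)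
  have r2 := aux_bmul (aux_bmul hwm hA) (he.trans hP)
  have r3 := (aux_bmul hY2 (hQ.add (hφ.trans hP))).const_mul_left 2
  refine aux_re_of ((r1.add r2).add r3) ?_
  filter_upwards [hp, hE] with z hz hEz
  have hz' : (P z : ℂ) ≠ 0 := by exact_mod_cast hz
  have : w z ^ m * A z * c z + ((c z + e z) * (G1 z / (P z : ℂ) ^ m - w z ^ m * A z) + 
    w z ^ m * A z * e z + 2 * (G2 z / (P z : ℂ) ^ m * (Q z + φ z))) = 
    (((P z ^ m)⁻¹ : ℝ) : ℂ) * (G1 z * (c z + e z) + 2 * G2 z * (Q z + φ z)) := by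
    push_cast
    field_simp
    ring
  rw [this, re_ofReal_mul, hEz, mul_zero]

lemma aux_beta {ι : Type*} {l : Filter ι} {P : ι → ℝ} {w G1 G2 k B c e φ Q : ι → ℂ} {g : ι → ℝ} (m : ℕ)
    (hp : ∀ᶠ z in l, P z ≠ 0) 
    (hw : w =O[l] (fun _ => (1:ℝ))) (hk : k =O[l] (fun _ => (1:ℝ))) (hB : B =O[l] g)
    (hc : c =O[l] (fun _ => (1:ℝ))) (hg : g =O[l] (fun _ => (1:ℝ)))
    (he : e =O[l] P) (hφ : φ =O[l] P) (hP : P =O[l] g) (hQ : Q =O[l] g)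
    (hX1 : (fun z => G1 z / (P z : ℂ) ^ (m+1) - w z ^ (m+1) * k z) =O[l] P)
    (hX2 : (fun z => G2 z / (P z : ℂ) ^ m - w z ^ m * B z) =O[l] P)
    (hE : ∀ᶠ z in l, (G1 z * (c z + e z) + 2 * G2 z * (Q z + φ z)).re = 0) :
    (fun z => (w z ^ (m+1) * k z * c z + 2 * w z ^ m * B z * (Q z / P z)).re) =O[l] g := by
  have hwm : ∀ m, (fun z => w z ^ m) =O[l] (fun _ => (1:ℝ)) := fun m => by simpa using hw.pow m
  have hce : (fun z => c z + e z) =O[l] (fun _ => (1:ℝ)) := hc.add (he.trans (hP.trans hg))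
  have hdiv : ∀ u : ι → ℂ, u =O[l] P → (fun z => u z / P z) =O[l] (fun _ => (1:ℝ)) := by
    intro u hu
    obtain ⟨C, hC⟩ := hu.bound
    apply Asymptotics.IsBigO.of_bound C
    filter_upwards [hC, hp] with z hz hpz
    rw [norm_div, div_le_iff₀ (by simpa using hpz)]
    simpa using hz
  have r1 := aux_bmul hce (hX1.trans hP)
  have r2 := aux_bmul (aux_bmul (hwm (m+1)) hk) (he.trans hP)
  have r3 := (aux_bmul (hdiv _ hX2) hQ).const_mul_left 2
  have r4 := (aux_bmul (hdiv _ hφ) (hX2.trans hP)).const_mul_left 2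
  have r5 := (aux_bmul (aux_bmul (hdiv _ hφ) (hwm m)) hB).const_mul_left 2
  refine aux_re_of ((((r1.add r2).add r3).add r4).add r5) ?_
  filter_upwards [hp, hE] with z hz hEz
  have hz' : (P z : ℂ) ≠ 0 := by exact_mod_cast hz
  rw [← mul_zero ((P z ^ (m+1))⁻¹ : ℝ), ← hEz, ← re_ofReal_mul]
  congr 1
  push_cast
  field_simp
  ring


lemma aux_main1 (r s : ℝ) (hr : 0 < r) (hs : 0 < s)
    (P : ℂ → ℝ) (f : ℂ → ℝ → ℝ)
    (hPsm : ContDiffOn ℝ (⊤ : ℕ∞) P (ball (0:ℂ) r))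
    (hP0 : P 0 = 0)
    (hPpos : ∀ z ∈ ball (0:ℂ) r, z ≠ 0 → 0 < P z)
    (hPflat : ∀ n : ℕ, P =o[nhds (0:ℂ)] fun z => ‖z‖ ^ n)
    (hfan : AnalyticOnNhd ℝ (fun q : ℂ × ℝ => f q.1 q.2) (ball (0:ℂ) r ×ˢ Set.Ioo (-r) r))
    (hf0 : ∀ z ∈ ball (0:ℂ) r, f z 0 = 0)
    (h₁ h₂ : ℂ × ℂ → ℂ)
    (hh₁ : DifferentiableOn ℂ h₁ (ball (0 : ℂ × ℂ) s))
    (hh₂ : DifferentiableOn ℂ h₂ (ball (0 : ℂ × ℂ) s))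
    (hne : ∃ z ∈ ball (0 : ℂ × ℂ) s, h₁ z ≠ 0 ∨ h₂ z ≠ 0)
    (htang : ∀ z : ℂ × ℂ, z ∈ ball (0 : ℂ × ℂ) s → z.1 ∈ ball (0:ℂ) r → z.2 ∈ ball (0:ℂ) r →
      z.1.re + P z.2 + f z.2 z.1.im = 0 →
      (h₁ z * wDeriv (fun w => w.re + P z.2 + f z.2 w.im) z.1
        + h₂ z * wDeriv (fun w => z.1.re + P w + f w z.1.im) z.2).re = 0) :
    ∃ (m : ℕ) (A B k : ℂ → ℂ) (a : ℂ → ℝ), AnalyticAt ℂ A 0 ∧ AnalyticAt ℂ B 0 ∧ AnalyticAt ℂ k 0 ∧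
      ContinuousAt a 0 ∧ ((¬∀ᶠ z in nhds 0, A z = 0) ∨ (¬∀ᶠ z in nhds 0, B z = 0)) ∧
      (m = 0 → ∀ᶠ z in nhds 0, A z = h₁ (0, z) ∧ B z = h₂ (0, z)) ∧
      (∀ τ : ℝ, ∀ n : ℕ, (fun z => ((I * (1 + I * a z) * τ - 1) ^ m * A z * (1 - I * a z)).re)
        =O[nhdsWithin 0 {0}ᶜ] fun z : ℂ => ‖z‖ ^ n) ∧
      ((∀ᶠ z in nhds 0, A z = 0) → ∀ l : ℕ, (B =O[nhds 0] fun z : ℂ => ‖z‖ ^ l) → ∀ τ : ℝ,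
        (fun z => ((I * (1 + I * a z) * τ - 1) ^ (m+1) * k z * (1 - I * a z) + 
          2 * (I * (1 + I * a z) * τ - 1) ^ m * B z * (wDeriv P z / P z)).re)
        =O[nhdsWithin 0 {0}ᶜ] fun z : ℂ => ‖z‖ ^ l) := by
  obtain ⟨m, A, B, k, hA, hB, hk, hnt, ⟨C1, hC1⟩, ⟨C2, hC2⟩, hm⟩ := aux_normal s hs h₁ h₂ hh₁ hh₂ hne
  obtain ⟨a, ha, hmain⟩ := aux_eq r s hr hs P f hPsm hP0 hfan hf0 h₁ h₂ htang
  set F := nhdsWithin (0:ℂ) {0}ᶜ with hF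
  have hFle : F ≤ nhds 0 := nhdsWithin_le_nhds
  have hcd : ContDiffAt ℝ 2 P 0 := (hPsm.contDiffAt (ball_mem_nhds _ hr)).of_le (WithTop.coe_le_coe.2 (le_top : (2:ℕ∞) ≤ ⊤))
  have hPpos' : ∀ᶠ z in nhds (0:ℂ), z ≠ 0 → 0 < P z := by
    filter_upwards [ball_mem_nhds (0:ℂ) hr] with z hz using hPpos z hz
  have hPF : ∀ᶠ z in F, 0 < P z := by
    filter_upwards [hFle hPpos', self_mem_nhdsWithin] with z h1 h2 using h1 h2
  have hPne : ∀ᶠ z in F, P z ≠ 0 := hPF.mono (fun z h => h.ne')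
  obtain ⟨K, hK⟩ := aux_glaeser P hcd hP0 hPpos'
  have hPn : ∀ n : ℕ, P =O[F] fun z : ℂ => ‖z‖ ^ n := fun n => ((hPflat n).isBigO).mono hFle
  have hQn : ∀ n : ℕ, (fun z => wDeriv P z) =O[F] fun z : ℂ => ‖z‖ ^ n := by
    intro n
    apply Asymptotics.IsBigO.of_bound |K|
    filter_upwards [hK, hPF, hFle ((hPflat (2*n)).bound (zero_lt_one))] with z h1 h2 h3
    refine (aux_wDeriv_norm _ _).trans (h1.trans ?_)
    have h4 : √(P z) ≤ ‖z‖ ^ n := by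
      rw [Real.sqrt_le_left (by positivity)]
      rw [one_mul, Real.norm_of_nonneg h2.le] at h3
      refine h3.trans (le_of_eq ?_)
      simp; ring
    rw [norm_pow, norm_norm]
    calc K * √(P z) ≤ |K| * √(P z) := by gcongr; exact le_abs_self K
      _ ≤ _ := by gcongr
  have hg1 : ∀ n : ℕ, (fun z : ℂ => ‖z‖ ^ n) =O[F] (fun _ => (1:ℝ)) := by
    intro n
    have : ContinuousAt (fun z : ℂ => ‖z‖ ^ n) 0 := by fun_prop
    exact (this.isBigO_one ℝ).mono hFle
  have hone : ∀ {u : ℂ → ℂ}, ContinuousAt u 0 → u =O[F] (fun _ => (1:ℝ)) := 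
    fun hu => (hu.isBigO_one ℝ).mono hFle
  have hac : ContinuousAt (fun z => (a z : ℂ)) 0 := continuous_ofReal.continuousAt.comp ha
  have hc : (fun z => 1 - I * (a z : ℂ)) =O[F] (fun _ => (1:ℝ)) := hone (by fun_prop)
  have hw : ∀ τ : ℝ, (fun z => I * (1 + I * (a z : ℂ)) * τ - 1) =O[F] (fun _ => (1:ℝ)) := 
    fun τ => hone (by fun_prop)
  have hPt : Tendsto P F (nhds 0) := by
    have := hcd.continuousAt.tendsto
    rw [hP0] at this; exact this.mono_left hFle
  have hp1 : P =O[F] (fun _ => (1:ℝ)) := by simpa using hPn 0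
  have hpC : (fun z => (P z : ℂ)) =O[F] (fun _ => (1:ℝ)) := by
    exact (Asymptotics.isBigO_norm_left (f' := fun z => (P z : ℂ))).1 (by simpa using hp1)
  have hPneC : ∀ᶠ z in F, (P z : ℂ) ≠ 0 := hPne.mono (fun z h => by exact_mod_cast h)
  have hPC : ∀ u : ℂ → ℂ, u =O[F] (fun z => (P z : ℂ)) → u =O[F] P := by
    intro u hu
    have := hu.norm_right
    simp only [Complex.norm_real] at this
    exact this.of_norm_right
  have hζ' : ∀ (τ : ℝ) (ζ : ℂ → ℂ), (fun z => ζ z - P z * (I * (1 + I * a z) * τ - 1)) =O[nhds 0] (fun z => P z ^ 2) →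
      (fun z => ζ z - P z * (I * (1 + I * a z) * τ - 1)) =O[F] (fun z => (P z : ℂ) ^ 2) := by
    intro τ ζ h
    have := (h.mono hFle).norm_right
    refine Asymptotics.IsBigO.of_norm_right ?_
    simpa using this
  have hζt : ∀ (τ : ℝ) (ζ : ℂ → ℂ), (fun z => ζ z - P z * (I * (1 + I * a z) * τ - 1)) =O[nhds 0] (fun z => P z ^ 2) →
      Tendsto (fun z => (ζ z, z)) F (nhds (0 : ℂ × ℂ)) := by
    intro τ ζ h
    have e1 : Tendsto (fun z => ζ z - P z * (I * (1 + I * a z) * τ - 1)) F (nhds 0) := 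
      (h.mono hFle).trans_tendsto (by simpa using hPt.pow 2)
    have e2 : Tendsto (fun z => (P z : ℂ) * (I * (1 + I * a z) * τ - 1)) F (nhds 0) := by
      have : (fun z => (P z : ℂ) * (I * (1 + I * a z) * τ - 1)) =O[F] P := by
        apply hPC
        have := (Asymptotics.isBigO_refl (fun z => (P z : ℂ)) F).norm_right.mul (hw τ)
        simp only [mul_one] at this
        exact this.of_norm_right
      exact this.trans_tendsto hPt
    have e3 : Tendsto ζ F (nhds 0) := by simpa using e1.add e2
    have := e3.prodMk_nhds (tendsto_id.mono_left hFle : Tendsto id F (nhds (0:ℂ)))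
    exact this
  have hG2 : ∀ (τ : ℝ) (ζ : ℂ → ℂ), (fun z => ζ z - P z * (I * (1 + I * a z) * τ - 1)) =O[nhds 0] (fun z => P z ^ 2) →
      (fun z => h₂ (ζ z, z) / (P z : ℂ) ^ m - (I * (1 + I * a z) * τ - 1) ^ m * B z) =O[F] P := by
    intro τ ζ h
    refine hPC _ (aux_lemX m hPneC hpC (hw τ) (hone hB.continuousAt) (hζ' τ ζ h) ?_)
    apply Asymptotics.IsBigO.of_bound C2
    filter_upwards [(hζt τ ζ h).eventually hC2] with z hz
    simpa using hz
  refine ⟨m, A, B, k, a, hA, hB, hk, ha, hnt, hm, ?_, ?_⟩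
  · intro τ n
    obtain ⟨ζ, e, φ, he, hφ, hz, hE⟩ := hmain τ
    refine aux_alpha m hPne (hw τ) (hone hA.continuousAt) (hone hB.continuousAt) hc (hg1 n) 
      (he.mono hFle) (hφ.mono hFle) (hPn n) (hQn n) ?_ (hG2 τ ζ hz) (hFle hE)
    refine hPC _ (aux_lemX m hPneC hpC (hw τ) (hone hA.continuousAt) (hζ' τ ζ hz) ?_)
    have u1 : (fun z => h₁ (ζ z, z) - ζ z ^ m * (A z + k z * ζ z)) =O[F] fun z => ζ z ^ (m+2) := by
      apply Asymptotics.IsBigO.of_bound C1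
      filter_upwards [(hζt τ ζ hz).eventually hC1] with z hz
      simpa using hz
    have hζb : ζ =O[F] (fun _ => (1:ℝ)) := 
      Tendsto.isBigO_one ℝ (continuous_fst.continuousAt.tendsto.comp (hζt τ ζ hz))
    have u2 : (fun z => ζ z ^ (m+2)) =O[F] fun z => ζ z ^ (m+1) := by
      have := (Asymptotics.isBigO_refl (fun z => ζ z ^ (m+1)) F).norm_right.mul hζb
      simp only [mul_one] at this
      exact this.of_norm_right.congr_left (fun z => by ring)
    have u3 : (fun z => ζ z ^ (m+1) * k z) =O[F] fun z => ζ z ^ (m+1) := by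
      have := (Asymptotics.isBigO_refl (fun z => ζ z ^ (m+1)) F).norm_right.mul (hone hk.continuousAt)
      simp only [mul_one] at this
      exact this.of_norm_right
    exact ((u1.trans u2).add u3).congr_left (fun z => by ring)
  · intro hA0 l hBl τ
    obtain ⟨ζ, e, φ, he, hφ, hz, hE⟩ := hmain τ
    refine aux_beta m hPne (hw τ) (hone hk.continuousAt) (hBl.mono hFle) hc (hg1 l) 
      (he.mono hFle) (hφ.mono hFle) (hPn l) (hQn l) ?_ (hG2 τ ζ hz) (hFle hE)
    refine hPC _ (aux_lemX (m+1) hPneC hpC (hw τ) (hone hk.continuousAt) (hζ' τ ζ hz) ?_)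
    apply Asymptotics.IsBigO.of_bound C1
    filter_upwards [(hζt τ ζ hz).eventually hC1, hFle hA0] with z hz hAz
    simp only [hAz, zero_add] at hz
    rw [norm_pow]
    refine le_trans (le_of_eq ?_) hz
    congr 1; ring


lemma aux_ray (ω : ℂ) (hω : ‖ω‖ = 1) : 
    Tendsto (fun ρ : ℝ => (ρ : ℂ) * ω) (nhdsWithin 0 (Ioi 0)) (nhdsWithin 0 {0}ᶜ) := by
  apply tendsto_nhdsWithin_of_tendsto_nhds_of_eventually_within
  · have : ContinuousAt (fun ρ : ℝ => (ρ : ℂ) * ω) 0 := by fun_prop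
    have h := this.tendsto
    simp only [ofReal_zero, zero_mul] at h
    exact h.mono_left nhdsWithin_le_nhds
  · filter_upwards [self_mem_nhdsWithin] with ρ hρ
    have h1 : (ρ:ℂ) ≠ 0 := by exact_mod_cast (ne_of_gt hρ)
    have h2 : ω ≠ 0 := by rw [← norm_pos_iff, hω]; exact one_pos
    exact mul_ne_zero h1 h2

lemma aux_factor (k : ℂ → ℂ) (hk : AnalyticAt ℂ k 0) (h : ¬ ∀ᶠ z in nhds 0, k z = 0) :
    ∃ (j : ℕ) (u : ℂ → ℂ), AnalyticAt ℂ u 0 ∧ u 0 ≠ 0 ∧ ∀ᶠ z in nhds 0, k z = z ^ j * u z := by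
  obtain ⟨j, u, hu, hu0, he⟩ := hk.exists_eventuallyEq_pow_smul_nonzero_iff.2 h
  exact ⟨j, u, hu, hu0, by simpa using he⟩

lemma aux_order (k Cf : ℂ → ℂ) (n : ℕ) (hk : AnalyticAt ℂ k 0) (hk0 : k 0 = 0) 
    (hC : ContinuousAt Cf 0) (hC0 : Cf 0 ≠ 0)
    (h : (fun z => (Cf z * k z).re) =O[nhdsWithin 0 {0}ᶜ] fun z : ℂ => ‖z‖ ^ n) :
    k =O[nhds 0] fun z : ℂ => ‖z‖ ^ n := by
  by_cases hz : ∀ᶠ z in nhds 0, k z = 0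
  · apply Asymptotics.IsBigO.of_bound 0
    filter_upwards [hz] with z hz
    simp [hz]
  obtain ⟨j, u, hu, hu0, he⟩ := aux_factor k hk hz
  have hj : j ≠ 0 := by
    rintro rfl
    have := he.self_of_nhds
    rw [hk0] at this
    simp at this
    exact hu0 this.symm
  by_cases hjn : n ≤ j
  · have h1 : u =O[nhds 0] (fun _ => (1:ℝ)) := hu.continuousAt.isBigO_one ℝ
    have h2 : (fun z : ℂ => z ^ j) =O[nhds 0] fun z : ℂ => ‖z‖ ^ n := by
      apply Asymptotics.IsBigO.of_bound 1
      filter_upwards [ball_mem_nhds (0:ℂ) one_pos] with z hz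
      have hz : ‖z‖ < 1 := by simpa using hz
      simp only [norm_pow, norm_norm, one_mul]
      exact pow_le_pow_of_le_one (norm_nonneg _) hz.le hjn
    have h3 := h2.mul h1
    simp only [mul_one] at h3
    exact h3.congr' (by filter_upwards [he] with z hz using hz.symm) (EventuallyEq.refl _ _)
  · exfalso
    push Not at hjn
    obtain ⟨ω, hω, hωj⟩ := aux_unit_root j hj _ (mul_ne_zero hC0 hu0)
    have hray := aux_ray ω hω
    obtain ⟨C, hCb⟩ := h.bound
    have h1 : ∀ᶠ ρ : ℝ in nhdsWithin 0 (Ioi 0), 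
        (ω ^ j * (Cf (ρ * ω) * u (ρ * ω))).re ≤ C * ρ ^ (n - j) := by
      filter_upwards [hray.eventually hCb, hray.eventually (nhdsWithin_le_nhds he), 
        self_mem_nhdsWithin] with ρ h1 h2 hρ
      have hρ : 0 < ρ := hρ
      rw [h2] at h1
      have e1 : Cf (ρ * ω) * ((ρ * ω) ^ j * u (ρ * ω)) = 
        ((ρ ^ j : ℝ) : ℂ) * (ω ^ j * (Cf (ρ * ω) * u (ρ * ω))) := by push_cast; ring
      rw [e1, re_ofReal_mul] at h1
      have e2 : ‖‖(ρ:ℂ) * ω‖ ^ n‖ = ρ ^ j * ρ ^ (n - j) := by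
        rw [norm_pow, norm_norm, norm_mul, hω, mul_one, Complex.norm_real, Real.norm_of_nonneg hρ.le,
          ← pow_add]
        congr 1; omega
      rw [e2] at h1
      have h3 := (le_abs_self _).trans h1
      have : 0 < ρ ^ j := by positivity
      refine le_of_mul_le_mul_left (h3.trans (le_of_eq ?_)) this
      ring
    have h2 : ContinuousAt (fun z : ℂ => (ω ^ j * (Cf z * u z)).re) 0 := 
      continuous_re.continuousAt.comp (continuousAt_const.mul (hC.mul hu.continuousAt))
    have h3 := (h2.tendsto.mono_left nhdsWithin_le_nhds).comp hray
    have h4 : Tendsto (fun ρ : ℝ => C * ρ ^ (n - j)) (nhdsWithin 0 (Ioi 0)) (nhds 0) := by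
      have : ContinuousAt (fun ρ : ℝ => C * ρ ^ (n - j)) 0 := by fun_prop
      have h := this.tendsto
      simp only [zero_pow (show n - j ≠ 0 by omega), mul_zero] at h
      exact h.mono_left nhdsWithin_le_nhds
    have h5 := le_of_tendsto_of_tendsto h3 h4 h1
    rw [hωj, ofReal_re] at h5
    have := norm_pos_iff.2 (mul_ne_zero hC0 hu0)
    linarith

lemma aux_flat (k : ℂ → ℂ) (hk : AnalyticAt ℂ k 0) 
    (h : ∀ n : ℕ, k =O[nhds 0] fun z : ℂ => ‖z‖ ^ n) : ∀ᶠ z in nhds 0, k z = 0 := by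
  by_contra hz
  obtain ⟨j, u, hu, hu0, he⟩ := aux_factor k hk hz
  obtain ⟨C, hC⟩ := (h (j+1)).bound
  have h1 : ∀ᶠ z in nhdsWithin (0:ℂ) {0}ᶜ, ‖u z‖ ≤ C * ‖z‖ := by
    filter_upwards [nhdsWithin_le_nhds hC, nhdsWithin_le_nhds he, self_mem_nhdsWithin] with z h1 h2 h3
    have h3 : 0 < ‖z‖ := norm_pos_iff.2 h3
    rw [h2, norm_mul, norm_pow, norm_pow, norm_norm] at h1
    have : 0 < ‖z‖ ^ j := by positivity
    refine le_of_mul_le_mul_left (h1.trans (le_of_eq ?_)) this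
    ring
  have h2 := (hu.continuousAt.norm.tendsto.mono_left (nhdsWithin_le_nhds (s := {0}ᶜ)))
  have h3 : Tendsto (fun z : ℂ => C * ‖z‖) (nhdsWithin (0:ℂ) {0}ᶜ) (nhds 0) := by
    have : ContinuousAt (fun z : ℂ => C * ‖z‖) 0 := by fun_prop
    have h := this.tendsto
    simp only [norm_zero, mul_zero] at h
    exact h.mono_left nhdsWithin_le_nhds
  have := le_of_tendsto_of_tendsto h2 h3 h1
  exact hu0 (norm_le_zero_iff.1 this)

lemma aux_vander {ι : Type*} {l : Filter ι} {g : ι → ℝ} (N : ℕ) (c : Fin N → ι → ℝ)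
    (h : ∀ τ : ℝ, (fun z => ∑ j : Fin N, c j z * τ ^ (j:ℕ)) =O[l] g) (j : Fin N) : c j =O[l] g := by
  set V := Matrix.vandermonde (fun i : Fin N => ((i:ℕ):ℝ)) with hV
  have hdet : V.det ≠ 0 := Matrix.det_vandermonde_ne_zero_iff.2 (fun i j hij => by
    apply Fin.ext; exact_mod_cast hij)
  have hVV : V⁻¹ * V = 1 := Matrix.nonsing_inv_mul V (isUnit_iff_ne_zero.2 hdet)
  have e : c j = fun z => ∑ i : Fin N, V⁻¹ j i * (∑ q : Fin N, c q z * ((i:ℕ):ℝ) ^ (q:ℕ)) := by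
    funext z
    have h1 : (V⁻¹ * V).mulVec (fun q => c q z) j = c j z := by rw [hVV]; simp
    rw [← h1, ← Matrix.mulVec_mulVec]
    simp only [Matrix.mulVec, dotProduct, hV, Matrix.vandermonde_apply]
    refine Finset.sum_congr rfl (fun i _ => ?_)
    congr 1
    exact Finset.sum_congr rfl (fun i _ => mul_comm _ _)
  rw [e]
  refine Asymptotics.IsBigO.fun_sum (s := Finset.univ)
    (A := fun i z => V⁻¹ j i * (∑ q : Fin N, c q z * ((i:ℕ):ℝ) ^ (q:ℕ))) (fun i _ => ?_)
  exact (h _).const_mul_left _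

open Polynomial in
lemma aux_polyO {ι : Type*} {l : Filter ι} {g : ι → ℝ} (N : ℕ) (p : ι → ℂ[X])
    (hp : ∀ z, (p z).natDegree < N)
    (h : ∀ τ : ℝ, (fun z => ((p z).eval (τ:ℂ)).re) =O[l] g) (j : ℕ) (hj : j < N) : 
    (fun z => ((p z).coeff j).re) =O[l] g := by
  refine aux_vander N (fun j z => ((p z).coeff j).re) (fun τ => ?_) ⟨j, hj⟩
  refine (h τ).congr_left (fun z => ?_)
  rw [eval_eq_sum_range' (hp z), re_sum, Finset.sum_range]
  refine Finset.sum_congr rfl (fun i _ => ?_)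
  rw [← ofReal_pow, re_mul_ofReal]

open Polynomial in
lemma aux_c1 (x : ℂ) (m : ℕ) : ((C x * X + C (-1) : ℂ[X]) ^ m).coeff 1 = -(-1) ^ m * (m * x) := by
  induction m with
  | zero => simp [coeff_one]
  | succ m ih =>
    have c0 : ((C x * X + C (-1) : ℂ[X]) ^ m).coeff 0 = (-1) ^ m := by
      rw [coeff_zero_eq_eval_zero]; simp
    rw [pow_succ, mul_coeff_one, ih, c0]
    simp [coeff_one]
    ring

open Polynomial in
lemma aux_coef {ι : Type*} {l : Filter ι} {g : ι → ℝ} (m : ℕ) (x Aa Bb : ι → ℂ) 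
    (h : ∀ τ : ℝ, (fun z => ((x z * τ - 1) ^ m * (Bb z + Aa z * τ)).re) =O[l] g) :
    (fun z => (Bb z).re) =O[l] g ∧ (fun z => (Aa z - m * x z * Bb z).re) =O[l] g ∧ 
    (fun z => (x z ^ m * Aa z).re) =O[l] g := by
  set L : ι → ℂ[X] := fun z => C (x z) * X + C (-1) with hL
  set R : ι → ℂ[X] := fun z => C (Aa z) * X + C (Bb z) with hR
  have dL : ∀ z, (L z).natDegree ≤ 1 := fun z => natDegree_linear_le
  have dR : ∀ z, (R z).natDegree ≤ 1 := fun z => natDegree_linear_le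
  have dLm : ∀ z, ((L z) ^ m).natDegree ≤ m := fun z => by 
    simpa using natDegree_pow_le_of_le m (dL z)
  have key := aux_polyO (l := l) (g := g) (m + 2) (fun z => L z ^ m * R z) (fun z => by
    have := natDegree_mul_le_of_le (dLm z) (dR z)
    omega) (fun τ => by
    refine (h τ).congr_left (fun z => ?_)
    simp only [hL, hR, eval_mul, eval_pow, eval_add, eval_C, eval_X]
    congr 1; ring)
  have c0 : ∀ z, (L z ^ m).coeff 0 = (-1) ^ m := fun z => by
    rw [coeff_zero_eq_eval_zero]; simp [hL]
  have c1 : ∀ z, (L z ^ m).coeff 1 = -(-1) ^ m * (m * x z) := fun z => aux_c1 (x z) m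
  have hs : ∀ u : ι → ℂ, (fun z => ((-1) ^ m * u z).re) =O[l] g → (fun z => (u z).re) =O[l] g := by
    intro u hu
    rcases neg_one_pow_eq_or ℂ m with h | h
    · simpa [h] using hu
    · simpa [h] using hu
  refine ⟨?_, ?_, ?_⟩
  · apply hs
    refine (key 0 (by omega)).congr_left (fun z => ?_)
    rw [mul_coeff_zero, c0]; simp [hR]
  · apply hs
    refine (key 1 (by omega)).congr_left (fun z => ?_)
    rw [mul_coeff_one, c0, c1]
    congr 1
    simp [hR]; ring
  · refine (key (m+1) (by omega)).congr_left (fun z => ?_)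
    rw [coeff_mul_add_eq_of_natDegree_le (dLm z) (dR z)]
    have := coeff_pow_of_natDegree_le (m := m) (dL z)
    rw [mul_one] at this
    rw [this]; simp [hL, hR, coeff_one]


lemma aux_up {Q : ℂ → Prop} (h : ∀ᶠ z in nhdsWithin 0 {0}ᶜ, Q z) (h0 : Q 0) : ∀ᶠ z in nhds 0, Q z := by
  rw [eventually_nhdsWithin_iff] at h
  filter_upwards [h] with z hz
  by_cases hz0 : z = 0
  · rw [hz0]; exact h0
  · exact hz hz0

lemma aux_DP (P : ℂ → ℝ) (z b : ℂ) (θ : ℂ) (h : P z ≠ 0) : 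
    fderiv ℝ P z (θ * b) = P z * (θ * (2 * (b * (wDeriv P z / P z)))).re := by
  have h1 := aux_wDeriv_re P z (θ * b)
  have h' : (P z : ℂ) ≠ 0 := by exact_mod_cast h
  rw [← re_ofReal_mul]
  have : (P z : ℂ) * (θ * (2 * (b * (wDeriv P z / P z)))) = ((2:ℝ):ℂ) * (θ * b * wDeriv P z) := by
    push_cast; field_simp
  rw [this, re_ofReal_mul, h1]; ring

lemma aux_normpow_tendsto (l : ℕ) (hl : l ≠ 0) : 
    Tendsto (fun z : ℂ => ‖z‖ ^ l) (nhdsWithin 0 {0}ᶜ) (nhds 0) := by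
  have : ContinuousAt (fun z : ℂ => ‖z‖ ^ l) 0 := by fun_prop
  have h := this.tendsto
  simp only [norm_zero, zero_pow hl] at h
  exact h.mono_left nhdsWithin_le_nhds

lemma aux_A0 (m : ℕ) (A : ℂ → ℂ) (a : ℂ → ℝ) (hA : AnalyticAt ℂ A 0) (ha : ContinuousAt a 0)
    (hm : m = 0 → A 0 = 0)
    (hα : ∀ τ : ℝ, ∀ n : ℕ, (fun z => ((I * (1 + I * a z) * τ - 1) ^ m * A z * (1 - I * a z)).re)
        =O[nhdsWithin 0 {0}ᶜ] fun z : ℂ => ‖z‖ ^ n) : ∀ᶠ z in nhds 0, A z = 0 := by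
  have hac : ContinuousAt (fun z => (a z : ℂ)) 0 := continuous_ofReal.continuousAt.comp ha
  have hc0 : ∀ x : ℝ, (1 - I * (x:ℂ)) ≠ 0 := by
    intro x h
    have := congrArg re h
    simp at this
  have key := fun n : ℕ => aux_coef (l := nhdsWithin (0:ℂ) {0}ᶜ) (g := fun z => ‖z‖ ^ n) m 
    (fun z => I * (1 + I * a z)) (fun _ => 0) (fun z => A z * (1 - I * a z)) (fun τ => by
      refine (hα τ n).congr_left (fun z => ?_)
      simp only [zero_mul, add_zero, mul_assoc])
  have hA0 : A 0 = 0 := by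
    by_cases hm0 : m = 0
    · exact hm hm0
    have k0 := (key 1).1.trans_tendsto (aux_normpow_tendsto 1 one_ne_zero)
    have k1 := (key 1).2.1.trans_tendsto (aux_normpow_tendsto 1 one_ne_zero)
    have cc : ContinuousAt (fun z => A z * (1 - I * a z)) 0 := hA.continuousAt.mul (by fun_prop)
    have c0 : Tendsto (fun z => (A z * (1 - I * a z)).re) (nhdsWithin 0 {0}ᶜ) (nhds _) := 
      ((continuous_re.continuousAt.comp cc).tendsto).mono_left nhdsWithin_le_nhds
    have cc1 : ContinuousAt (fun z => 0 - (m:ℂ) * (I * (1 + I * a z)) * (A z * (1 - I * a z))) 0 := by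
      have : ContinuousAt (fun z => (m:ℂ) * (I * (1 + I * a z))) 0 := by fun_prop
      exact continuousAt_const.sub (this.mul cc)
    have c1 : Tendsto (fun z => (0 - (m:ℂ) * (I * (1 + I * a z)) * (A z * (1 - I * a z))).re) 
        (nhdsWithin 0 {0}ᶜ) (nhds _) := 
      ((continuous_re.continuousAt.comp cc1).tendsto).mono_left nhdsWithin_le_nhds
    have e0 := tendsto_nhds_unique c0 k0
    have e1 := tendsto_nhds_unique c1 k1
    simp only [Function.comp] at e0 e1
    set Y := A 0 * (1 - I * a 0) with hY
    have hm' : (m:ℝ) ≠ 0 := by exact_mod_cast hm0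
    have e2 : (0 - (m:ℂ) * (I * (1 + I * a 0)) * Y).re = m * (Y.im + a 0 * Y.re) := by
      simp; ring
    rw [e2, e0, mul_zero, add_zero] at e1
    have e3 : Y.im = 0 := by simpa [hm'] using e1
    have : Y = 0 := Complex.ext e0 e3
    exact (mul_eq_zero.1 this).resolve_right (hc0 _)
  refine aux_flat A hA (fun n => ?_)
  refine aux_order A (fun z => 1 - I * a z) n hA hA0 (by fun_prop) (hc0 _) ?_
  exact (key n).1.congr_left (fun z => by rw [mul_comm])

/-- consequences of the (β) identity -/
lemma aux_beta_coef (m l : ℕ) (k M : ℂ → ℂ) (a : ℂ → ℝ)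
    (hβ : ∀ τ : ℝ, (fun z => ((I * (1 + I * a z) * τ - 1) ^ (m+1) * k z * (1 - I * a z) + 
          2 * (I * (1 + I * a z) * τ - 1) ^ m * M z).re)
        =O[nhdsWithin 0 {0}ᶜ] fun z : ℂ => ‖z‖ ^ l) :
    ((fun z => (2 * M z - k z * (1 - I * a z)).re) =O[nhdsWithin 0 {0}ᶜ] fun z : ℂ => ‖z‖ ^ l) ∧
    ((fun z => - (1 + a z ^ 2) * (k z).im + m * ((2 * M z - k z * (1 - I * a z)).im + 
      a z * (2 * M z - k z * (1 - I * a z)).re)) =O[nhdsWithin 0 {0}ᶜ] fun z : ℂ => ‖z‖ ^ l) ∧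
    ((fun z => (((I * (1 + I * a z)) ^ m * (I * (1 + (a z : ℂ) ^ 2))) * k z).re) 
      =O[nhdsWithin 0 {0}ᶜ] fun z : ℂ => ‖z‖ ^ l) := by
  obtain ⟨h0, h1, h2⟩ := aux_coef (l := nhdsWithin (0:ℂ) {0}ᶜ) (g := fun z => ‖z‖ ^ l) m 
    (fun z => I * (1 + I * a z)) (fun z => (I * (1 + (a z : ℂ) ^ 2)) * k z) 
    (fun z => 2 * M z - k z * (1 - I * a z)) (fun τ => by
      refine (hβ τ).congr_left (fun z => ?_)
      congr 1
      rw [pow_succ]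
      linear_combination ((I * (1 + I * a z) * τ - 1) ^ m) * (-I * a z ^2 * τ * k z) * I_sq)
  refine ⟨h0, h1.congr_left (fun z => ?_), h2.congr_left (fun z => ?_)⟩
  · set Y := 2 * M z - k z * (1 - I * a z)
    rw [← ofReal_pow]
    simp [-ofReal_pow]; ring
  · congr 1; ring


lemma aux_mpos (r : ℝ) (hr : 0 < r) (P : ℂ → ℝ)
    (hPd : ∀ z ∈ ball (0:ℂ) r, DifferentiableAt ℝ P z)
    (hP0 : P 0 = 0)
    (hPpos : ∀ z ∈ ball (0:ℂ) r, z ≠ 0 → 0 < P z)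
    (hPflat : ∀ n : ℕ, P =o[nhds (0:ℂ)] fun z => ‖z‖ ^ n)
    (m l : ℕ) (hm : m ≠ 0) (k B u : ℂ → ℂ) (a : ℂ → ℝ) (hk : AnalyticAt ℂ k 0) 
    (hu : ContinuousAt u 0) (hu0 : u 0 ≠ 0) (hBu : ∀ᶠ z in nhds 0, B z = z ^ l * u z)
    (ha : ContinuousAt a 0)
    (hβ : ∀ τ : ℝ, (fun z => ((I * (1 + I * a z) * τ - 1) ^ (m+1) * k z * (1 - I * a z) + 
          2 * (I * (1 + I * a z) * τ - 1) ^ m * (B z * (wDeriv P z / P z))).re)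
        =O[nhdsWithin 0 {0}ᶜ] fun z : ℂ => ‖z‖ ^ l) : False := by
  set F := nhdsWithin (0:ℂ) {0}ᶜ with hF
  have hFle : F ≤ nhds 0 := nhdsWithin_le_nhds
  have hac : ContinuousAt (fun z => (a z : ℂ)) 0 := continuous_ofReal.continuousAt.comp ha
  have hPF : ∀ᶠ z in F, 0 < P z := by
    filter_upwards [hFle (ball_mem_nhds (0:ℂ) hr), self_mem_nhdsWithin] with z h1 h2 using hPpos z h1 h2
  have hm' : (m:ℝ) ≠ 0 := by exact_mod_cast hm
  obtain ⟨c0, c1, c2⟩ := aux_beta_coef m l k (fun z => B z * (wDeriv P z / P z)) a hβ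
  set N : ℂ → ℂ := fun z => 2 * (B z * (wDeriv P z / P z)) with hN
  set S : ℂ → ℂ := fun z => k z * (1 - I * a z) + I * (((1 + a z ^ 2) * (k z).im / m : ℝ) : ℂ) with hS
  have hkc := hk.continuousAt
  have hab : a =O[F] (fun _ => (1:ℝ)) := (ha.isBigO_one ℝ).mono hFle
  have hg1 : (fun z : ℂ => ‖z‖ ^ l) =O[F] (fun _ => (1:ℝ)) := by
    have : ContinuousAt (fun z : ℂ => ‖z‖ ^ l) 0 := by fun_prop
    exact (this.isBigO_one ℝ).mono hFle
  have hSc : ContinuousAt S 0 := by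
    have h1 : ContinuousAt (fun z => ((1 + a z ^ 2) * (k z).im / m : ℝ)) 0 := by
      have : ContinuousAt (fun z => (k z).im) 0 := continuous_im.continuousAt.comp hkc
      exact ((continuousAt_const.add (ha.pow 2)).mul this).div_const _
    have h2 : ContinuousAt (fun z => (((1 + a z ^ 2) * (k z).im / m : ℝ) : ℂ)) 0 := 
      continuous_ofReal.continuousAt.comp h1
    exact (hkc.mul (by fun_prop)).add (continuousAt_const.mul h2)
  have hSb : S =O[F] (fun _ => (1:ℝ)) := (hSc.isBigO_one ℝ).mono hFle
  have hNS : (fun z => N z - S z) =O[F] fun z : ℂ => ‖z‖ ^ l := by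
    have c3 : (fun z => a z * (2 * (B z * (wDeriv P z / P z)) - k z * (1 - I * a z)).re) =O[F] 
      fun z : ℂ => ‖z‖ ^ l := by simpa using hab.mul c0
    have c4 := ((c1.const_mul_left (m:ℝ)⁻¹).sub c3)
    refine Asymptotics.IsBigO.trans ?_ (c0.norm_left.add c4.norm_left)
    apply Asymptotics.IsBigO.of_bound 1
    refine Eventually.of_forall (fun z => ?_)
    have e1 : (N z - S z).re = (2 * (B z * (wDeriv P z / P z)) - k z * (1 - I * a z)).re := by
      simp only [hN, hS, sub_re, add_re]; simp [-ofReal_div, -ofReal_mul, -ofReal_pow]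
    have e2 : (N z - S z).im = (m:ℝ)⁻¹ * (- (1 + a z ^ 2) * (k z).im + m * ((2 * (B z * (wDeriv P z / P z)) - k z * (1 - I * a z)).im + 
      a z * (2 * (B z * (wDeriv P z / P z)) - k z * (1 - I * a z)).re)) - 
      a z * (2 * (B z * (wDeriv P z / P z)) - k z * (1 - I * a z)).re := by
      have e3 : (N z - S z).im = (2 * (B z * (wDeriv P z / P z)) - k z * (1 - I * a z)).im - 
        (1 + a z ^ 2) * (k z).im / m := by
        have : N z - S z = (2 * (B z * (wDeriv P z / P z)) - k z * (1 - I * a z)) - 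
          I * (((1 + a z ^ 2) * (k z).im / m : ℝ) : ℂ) := by simp only [hN, hS]; ring
        rw [this, sub_im, I_mul_im, ofReal_re]
      rw [e3]
      field_simp
      ring
    rw [← e2, ← e1, one_mul, Real.norm_of_nonneg (by positivity)]
    simpa using norm_le_abs_re_add_abs_im (N z - S z)
  have hNb : N =O[F] (fun _ => (1:ℝ)) := 
    ((hNS.trans hg1).add hSb).congr_left (fun z => by ring)
  by_cases hl : l ≤ 1
  · obtain ⟨C, hC⟩ := hNb.bound
    set θ := (starRingEnd ℂ) (u 0) with hθ
    refine aux_disk r hr P hPd hP0 hPpos hPflat (fun z => θ * u z) (continuousAt_const.mul hu) ?_ 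
      (‖θ‖ * C) (aux_up ?_ (by simp [hP0]))
    · rw [hθ, ← normSq_eq_conj_mul_self, ofReal_re]; exact normSq_pos.2 hu0
    · filter_upwards [hPF, hC, hFle hBu, hFle (ball_mem_nhds (0:ℂ) one_pos)] with z h1 h2 h3 h4
      have h4 : ‖z‖ < 1 := by simpa using h4
      have e : z * (θ * u z) = (θ * z ^ (1 - l)) * B z := by
        rw [h3]
        interval_cases l <;> simp <;> ring
      rw [e, aux_DP P z _ _ h1.ne', mul_comm]
      gcongr
      refine (re_le_norm _).trans ?_
      rw [norm_mul, norm_mul, norm_pow]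
      rw [norm_one, mul_one] at h2
      have : ‖z‖ ^ (1 - l) ≤ 1 := pow_le_one₀ (norm_nonneg _) h4.le
      calc ‖θ‖ * ‖z‖ ^ (1 - l) * ‖N z‖ ≤ ‖θ‖ * 1 * C := by gcongr
        _ = _ := by ring
  push Not at hl
  have hNt : Tendsto N F (nhds (S 0)) := by
    have := (hNS.trans_tendsto (aux_normpow_tendsto l (by omega))).add (hSc.tendsto.mono_left hFle)
    simpa using this
  by_cases hS0 : S 0 = 0
  · have hk0 : k 0 = 0 := by
      have e1 : (k 0).re + a 0 * (k 0).im = 0 := by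
        have := congrArg re hS0
        simp only [hS, add_re, I_mul_re, ofReal_im] at this
        simp at this
        linarith
      have e2 : (k 0).im - a 0 * (k 0).re + (1 + a 0 ^ 2) * (k 0).im / m = 0 := by
        have := congrArg im hS0
        simp only [hS, add_im, I_mul_im, ofReal_re] at this
        simp at this
        linarith
      have e3 : (k 0).re = - a 0 * (k 0).im := by linarith
      rw [e3] at e2
      have hmp : 0 < (m:ℝ) := by positivity
      have e4 : (k 0).im * ((1 + a 0 ^ 2) * (1 + 1 / m)) = 0 := by
        rw [← e2]; ring
      have e5 : (k 0).im = 0 := by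
        have : (1 + a 0 ^ 2) * (1 + 1 / (m:ℝ)) ≠ 0 := by positivity
        exact (mul_eq_zero.1 e4).resolve_right this
      exact Complex.ext (by simp [e3, e5]) e5
    have hx : ∀ x : ℝ, (1 + I * (x:ℂ)) ≠ 0 := by
      intro x h
      have := congrArg re h
      simp at this
    have hx2 : ∀ x : ℝ, (1 + (x:ℂ)^2) ≠ 0 := by
      intro x
      have : (1 + x^2 : ℝ) ≠ 0 := by positivity
      exact_mod_cast this
    have hkl := aux_order k (fun z => (I * (1 + I * a z)) ^ m * (I * (1 + (a z : ℂ) ^ 2))) l hk hk0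
      (by fun_prop) (mul_ne_zero (pow_ne_zero _ (mul_ne_zero I_ne_zero (hx _))) 
        (mul_ne_zero I_ne_zero (hx2 _))) c2
    have hSl : S =O[F] fun z : ℂ => ‖z‖ ^ l := by
      have h1 : (fun z => (1 - I * (a z : ℂ)) * k z) =O[F] fun z : ℂ => ‖z‖ ^ l := by
        apply aux_bmul _ (hkl.mono hFle)
        have : ContinuousAt (fun z => (1 - I * (a z : ℂ))) 0 := by fun_prop
        exact (this.isBigO_one ℝ).mono hFle
      have h2 : (fun z => (((k z).im : ℝ) : ℂ)) =O[F] fun z : ℂ => ‖z‖ ^ l := by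
        refine Asymptotics.IsBigO.trans ?_ (hkl.mono hFle)
        apply Asymptotics.IsBigO.of_bound 1
        refine Eventually.of_forall (fun z => ?_)
        rw [Complex.norm_real, one_mul]
        exact abs_im_le_norm _
      have h3 : (fun z => (I * (1 + (a z : ℂ)^2) / m) * (((k z).im : ℝ) : ℂ)) =O[F] fun z : ℂ => ‖z‖ ^ l := by
        apply aux_bmul _ h2
        have : ContinuousAt (fun z => (I * (1 + (a z : ℂ)^2) / m)) 0 := by fun_prop
        exact (this.isBigO_one ℝ).mono hFle
      refine (h1.add h3).congr_left (fun z => ?_)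
      simp only [hS]; push_cast; ring
    have hNl : N =O[F] fun z : ℂ => ‖z‖ ^ l := (hNS.add hSl).congr_left (fun z => by ring)
    obtain ⟨C, hC⟩ := hNl.bound
    refine aux_sector r hr P hPd hP0 hPpos l hl u hu hu0 C (aux_up ?_ ?_)
    · filter_upwards [hPF, hC, hFle hBu] with z h1 h2 h3
      rw [← h3, ← one_mul (B z), aux_DP P z _ _ h1.ne', mul_comm]
      gcongr
      rw [one_mul]
      refine (re_le_norm _).trans (h2.trans (le_of_eq ?_))
      simp
    · simp [hP0, zero_pow (show l ≠ 0 by omega)]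
  · set θ := - (starRingEnd ℂ) (S 0) with hθ
    have hθ0 : θ ≠ 0 := by simp [hθ, hS0]
    refine aux_sector r hr P hPd hP0 hPpos l hl (fun z => θ * u z) (continuousAt_const.mul hu) 
      (mul_ne_zero hθ0 hu0) 0 (aux_up ?_ ?_)
    · have h1 : Tendsto (fun z => (θ * N z).re) F (nhds (θ * S 0).re) := 
        (continuous_re.tendsto _).comp (hNt.const_mul θ)
      have h2 : (θ * S 0).re < 0 := by
        rw [hθ, neg_mul, ← normSq_eq_conj_mul_self, neg_re, ofReal_re]
        have := normSq_pos.2 hS0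
        linarith
      filter_upwards [hPF, h1.eventually (gt_mem_nhds h2), hFle hBu] with z g1 g2 g3
      have e : z ^ l * (θ * u z) = θ * B z := by rw [g3]; ring
      rw [e, aux_DP P z _ _ g1.ne', zero_mul, zero_mul]
      exact mul_nonpos_of_nonneg_of_nonpos g1.le g2.le
    · simp [hP0, zero_pow (show l ≠ 0 by omega)]


lemma aux_mzero (r : ℝ) (hr : 0 < r) (P : ℂ → ℝ)
    (hPd : ∀ z ∈ ball (0:ℂ) r, DifferentiableAt ℝ P z)
    (hP0 : P 0 = 0)
    (hPpos : ∀ z ∈ ball (0:ℂ) r, z ≠ 0 → 0 < P z)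
    (hPflat : ∀ n : ℕ, P =o[nhds (0:ℂ)] fun z => ‖z‖ ^ n)
    (l : ℕ) (hl0 : l ≠ 0) (k B u : ℂ → ℂ) (a : ℂ → ℝ) (hk : AnalyticAt ℂ k 0) 
    (hu : ContinuousAt u 0) (hu0 : u 0 ≠ 0) (hBu : ∀ᶠ z in nhds 0, B z = z ^ l * u z)
    (ha : ContinuousAt a 0)
    (hβ : ∀ τ : ℝ, (fun z => ((I * (1 + I * a z) * τ - 1) ^ (0+1) * k z * (1 - I * a z) + 
          2 * (I * (1 + I * a z) * τ - 1) ^ 0 * (B z * (wDeriv P z / P z))).re)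
        =O[nhdsWithin 0 {0}ᶜ] fun z : ℂ => ‖z‖ ^ l) : l = 1 ∧ (u 0).re = 0 := by
  set F := nhdsWithin (0:ℂ) {0}ᶜ with hF
  have hFle : F ≤ nhds 0 := nhdsWithin_le_nhds
  have hPF : ∀ᶠ z in F, 0 < P z := by
    filter_upwards [hFle (ball_mem_nhds (0:ℂ) hr), self_mem_nhdsWithin] with z h1 h2 using hPpos z h1 h2
  obtain ⟨c0, c1, -⟩ := aux_beta_coef 0 l k (fun z => B z * (wDeriv P z / P z)) a hβ
  set N : ℂ → ℂ := fun z => 2 * (B z * (wDeriv P z / P z)) with hN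
  have hkc := hk.continuousAt
  have hab : a =O[F] (fun _ => (1:ℝ)) := (ha.isBigO_one ℝ).mono hFle
  have him : (fun z => (k z).im) =O[F] fun z : ℂ => ‖z‖ ^ l := by
    refine Asymptotics.IsBigO.trans ?_ c1
    apply Asymptotics.IsBigO.of_bound 1
    refine Eventually.of_forall (fun z => ?_)
    simp only [Nat.cast_zero, zero_mul, add_zero, one_mul, norm_mul, norm_neg]
    have : (1:ℝ) ≤ ‖1 + a z ^ 2‖ := by 
      rw [Real.norm_of_nonneg (by positivity)]; nlinarith [sq_nonneg (a z)]
    exact le_mul_of_one_le_left (norm_nonneg _) this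
  have hgt := aux_normpow_tendsto l hl0
  have him0 : (k 0).im = 0 := by
    have h1 : Tendsto (fun z => (k z).im) F (nhds (k 0).im) := 
      ((continuous_im.continuousAt.comp hkc).tendsto).mono_left hFle
    exact tendsto_nhds_unique h1 (him.trans_tendsto hgt)
  set κ := (k 0).re with hκ
  have hkl := aux_order (fun z => k z - k 0) (fun _ => - I) l (hk.sub analyticAt_const) (by simp) 
    continuousAt_const (by simp) (him.congr_left (fun z => by simp [him0]))
  have hkr : (fun z => (k z).re - κ) =O[F] fun z : ℂ => ‖z‖ ^ l := by
    refine Asymptotics.IsBigO.trans ?_ (hkl.mono hFle)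
    apply Asymptotics.IsBigO.of_bound 1
    refine Eventually.of_forall (fun z => ?_)
    rw [one_mul, hκ, ← sub_re]
    exact abs_re_le_norm _
  have hNr : (fun z => (N z).re - κ) =O[F] fun z : ℂ => ‖z‖ ^ l := by
    have h1 : (fun z => a z * (k z).im) =O[F] fun z : ℂ => ‖z‖ ^ l := by simpa using hab.mul him
    refine ((c0.add hkr).add h1).congr_left (fun z => ?_)
    simp only [hN, sub_re]
    simp
    ring
  obtain ⟨C, hC⟩ := hNr.bound
  have hDr : ∀ θ : ℝ, θ * κ ≤ 0 → ∀ᶠ z in F, fderiv ℝ P z (z ^ l * (θ * u z)) ≤ |θ| * C * ‖z‖ ^ l * P z := by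
    intro θ hθ
    filter_upwards [hPF, hC, hFle hBu] with z h1 h2 h3
    have e : z ^ l * (θ * u z) = θ * B z := by rw [h3]; ring
    rw [e, aux_DP P z _ _ h1.ne', mul_comm]
    gcongr
    rw [re_ofReal_mul]
    have h4 : θ * ((N z).re - κ) ≤ |θ| * (C * ‖z‖ ^ l) := by
      refine (le_abs_self _).trans ?_
      rw [abs_mul]
      gcongr
      simpa using h2
    linarith
  have hl1 : l = 1 := by
    by_contra hne
    have hl : 2 ≤ l := by omega
    have : ∃ θ : ℝ, θ ≠ 0 ∧ θ * κ ≤ 0 := by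
      by_cases h : κ ≤ 0
      · exact ⟨1, one_ne_zero, by linarith⟩
      · exact ⟨-1, by norm_num, by linarith⟩
    obtain ⟨θ, hθ0, hθ⟩ := this
    refine aux_sector r hr P hPd hP0 hPpos l hl (fun z => θ * u z) (continuousAt_const.mul hu) 
      (mul_ne_zero (by exact_mod_cast hθ0) hu0) (|θ| * C) (aux_up (hDr θ hθ) ?_)
    simp [hP0, zero_pow (show l ≠ 0 by omega)]
  refine ⟨hl1, ?_⟩
  by_contra hre
  subst hl1
  set θ := (u 0).re with hθ
  refine aux_disk r hr P hPd hP0 hPpos hPflat (fun z => θ * u z) (continuousAt_const.mul hu) ?_ 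
      (|θ| * (|C| + |κ|)) (aux_up ?_ (by simp [hP0]))
  · rw [re_ofReal_mul, ← hθ]; exact mul_self_pos.2 hre
  · filter_upwards [hPF, hC, hFle hBu, hFle (ball_mem_nhds (0:ℂ) one_pos)] with z h1 h2 h3 h4
    have h4 : ‖z‖ < 1 := by simpa using h4
    have e : z * (θ * u z) = θ * B z := by rw [h3]; ring
    rw [e, aux_DP P z _ _ h1.ne', mul_comm]
    gcongr
    rw [re_ofReal_mul]
    refine (le_abs_self _).trans ?_
    rw [abs_mul]
    gcongr
    have h5 : |(N z).re - κ| ≤ |C| := by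
      refine h2.trans ?_
      simp only [pow_one, norm_norm]
      calc C * ‖z‖ ≤ |C| * ‖z‖ := by gcongr; exact le_abs_self C
        _ ≤ |C| * 1 := by gcongr
        _ = _ := mul_one _
    calc |(N z).re| = |((N z).re - κ) + κ| := by congr 1; ring
      _ ≤ _ := abs_add_le _ _
      _ ≤ _ := by gcongr

/-- Claim 4.1 of the paper: for a non-trivial holomorphic vector field `H = h₁∂₁ + h₂∂₂`
vanishing at `0` and tangent to `M = {Re z₁ + P(z₂) + f(z₂, Im z₁) = 0}` with `P > 0` off `0`
and `P` flat at `0`, one has `h₁(0,z₂) ≡ 0` and `h₂(0,z₂) = iβz₂ + O(z₂²)` with `β ∈ ℝ*`. -/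
theorem stmt_15
    (r s : ℝ) (hr : 0 < r) (hs : 0 < s)
    (P : ℂ → ℝ) (f : ℂ → ℝ → ℝ)
    (hPsm : ContDiffOn ℝ (⊤ : ℕ∞) P (ball (0:ℂ) r))
    (hP0 : P 0 = 0)
    (hPpos : ∀ z ∈ ball (0:ℂ) r, z ≠ 0 → 0 < P z)
    (hPflat : ∀ n : ℕ, P =o[nhds (0:ℂ)] fun z => ‖z‖ ^ n)
    (hfan : AnalyticOnNhd ℝ (fun q : ℂ × ℝ => f q.1 q.2) (ball (0:ℂ) r ×ˢ Set.Ioo (-r) r))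
    (hf0 : ∀ z ∈ ball (0:ℂ) r, f z 0 = 0)
    (h₁ h₂ : ℂ × ℂ → ℂ)
    (hh₁ : DifferentiableOn ℂ h₁ (ball (0 : ℂ × ℂ) s))
    (hh₂ : DifferentiableOn ℂ h₂ (ball (0 : ℂ × ℂ) s))
    (hv₁ : h₁ 0 = 0) (hv₂ : h₂ 0 = 0)
    (hne : ∃ z ∈ ball (0 : ℂ × ℂ) s, h₁ z ≠ 0 ∨ h₂ z ≠ 0)
    (htang : ∀ z : ℂ × ℂ, z ∈ ball (0 : ℂ × ℂ) s → z.1 ∈ ball (0:ℂ) r → z.2 ∈ ball (0:ℂ) r →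
      z.1.re + P z.2 + f z.2 z.1.im = 0 →
      (h₁ z * wDeriv (fun w => w.re + P z.2 + f z.2 w.im) z.1
        + h₂ z * wDeriv (fun w => z.1.re + P w + f w z.1.im) z.2).re = 0)
    :
    ∃ t : ℝ, 0 < t ∧ (∀ z₂ ∈ ball (0:ℂ) t, h₁ (0, z₂) = 0) ∧
      ∃ β : ℝ, β ≠ 0 ∧
        (fun z₂ : ℂ => h₂ (0, z₂) - Complex.I * (β:ℂ) * z₂) =O[nhds (0:ℂ)]
          fun z₂ => ‖z₂‖ ^ 2 := by
  have hPd : ∀ z ∈ ball (0:ℂ) r, DifferentiableAt ℝ P z := fun z hz =>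
    (hPsm.contDiffAt (isOpen_ball.mem_nhds hz)).differentiableAt (by simp)
  obtain ⟨m, A, B, k, a, hA, hB, hk, ha, hnt, hm, hα, hβ⟩ := 
    aux_main1 r s hr hs P f hPsm hP0 hPpos hPflat hfan hf0 h₁ h₂ hh₁ hh₂ hne htang
  have hA0 := aux_A0 m A a hA ha (fun h => by
    have := (hm h).self_of_nhds.1
    rw [this]; exact hv₁) hα
  have hB0 : ¬∀ᶠ z in nhds 0, B z = 0 := hnt.resolve_left (fun h => h hA0)
  obtain ⟨l, u, hu, hu0, hBu⟩ := aux_factor B hB hB0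
  have hBl : B =O[nhds 0] fun z : ℂ => ‖z‖ ^ l := by
    have h1 : u =O[nhds 0] (fun _ => (1:ℝ)) := hu.continuousAt.isBigO_one ℝ
    have h2 : (fun z : ℂ => z ^ l) =O[nhds 0] fun z : ℂ => ‖z‖ ^ l := 
      (Asymptotics.isBigO_refl _ _).norm_left.of_norm_left.trans (by
        apply Asymptotics.IsBigO.of_bound 1
        refine Eventually.of_forall (fun z => ?_)
        simp)
    have h3 := h2.mul h1
    simp only [mul_one] at h3
    exact h3.congr' (by filter_upwards [hBu] with z hz using hz.symm) (EventuallyEq.refl _ _)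
  have hβ' := hβ hA0 l hBl
  simp only [mul_assoc (2 * _ : ℂ)] at hβ'
  by_cases hm0 : m = 0
  swap
  · exact (aux_mpos r hr P hPd hP0 hPpos hPflat m l hm0 k B u a hk hu.continuousAt hu0 hBu ha hβ').elim
  subst hm0
  have hAB := hm rfl
  have hl0 : l ≠ 0 := by
    rintro rfl
    have h1 := hBu.self_of_nhds
    have h2 := hAB.self_of_nhds.2
    rw [h2] at h1
    have h3 : h₂ (0, 0) = 0 := hv₂
    rw [h3] at h1
    simp at h1
    exact hu0 h1.symm
  obtain ⟨rfl, hre⟩ := aux_mzero r hr P hPd hP0 hPpos hPflat l hl0 k B u a hk hu.continuousAt hu0 hBu ha hβ'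
  obtain ⟨t, ht, htb⟩ := Metric.eventually_nhds_iff_ball.1 (hA0.and hAB)
  refine ⟨t, ht, fun z hz => ?_, (u 0).im, ?_, ?_⟩
  · rw [← (htb z hz).2.1]; exact (htb z hz).1
  · intro h
    exact hu0 (Complex.ext hre h)
  · have e0 : u 0 = I * ((u 0).im : ℂ) := by
      apply Complex.ext <;> simp [hre]
    have h1 : (fun z => u z - u 0) =O[nhds 0] fun z : ℂ => ‖z‖ := by
      have := hu.differentiableAt.isBigO_sub
      simpa using this.norm_right
    have h2 : (fun z : ℂ => z) =O[nhds 0] fun z : ℂ => ‖z‖ := 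
      (Asymptotics.isBigO_refl (fun z : ℂ => z) _).norm_right
    have h3 := h2.mul h1
    refine h3.congr' ?_ (Eventually.of_forall (fun z => by simp only []; ring))
    filter_upwards [hBu, hAB] with z g1 g2
    rw [← g2.2, g1, ← e0]; ring
end
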